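/- arXiv:2202.00860 — 3 statements merged into one kernel-verified Lean document; each statement's English description precedes it below -/
import Mathlib

section
/- Let (W,S) be a Coxeter system with connected subsets family F(S) (subsets I ⊆ S with W_I finite admitting no nontrivial direct product decomposition W_I = W_J × W_K with I = J ⊔ K). The map γ_I ↦ w_I (the longest element of W_I) extends to a surjective group homomorphism g_W : C_W → W from the generalized cactus group to W. -/
/-!
Everything rests on the exchange condition, used in its cocycle form: a reflection `t` is an
inversion of `u v` exactly when it is an inversion of one of `v` and `u` (for `u`, after
conjugation by `v`), but not of both. This follows from the action of `W` on reflections with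
signs, whose braid relations hold because the reflections in a dihedral subgroup occur an even
number of times in the inversion sequence of `(s_i s_j) ^ m_ij`.

The longest element `w_I` inverts all reflections of `W_I`. By the cocycle formula
`ℓ(w_I u) = ℓ(w_I) - ℓ(u)` on `W_I`, so `w_I` is unique, is an involution, and preserves length
when it conjugates `W_I`. If `I ⊆ J` or `W_I` and `W_J` commute, conjugation by `w_J` therefore
carries `W_I` to a standard parabolic subgroup and `w_I` to its longest element, which is the
cactus relation in `W`. Surjectivity holds because `w_{i} = s_i`.
-/

open CoxeterSystem

variable {B W : Type*} [Group W] {M : CoxeterMatrix B}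

/-- `w` is the longest element of the standard parabolic subgroup `W_I`. -/
def IsLongestElementOf (cs : CoxeterSystem M W) (I : Set B) (w : W) : Prop :=
  w ∈ Subgroup.closure (cs.simple '' I) ∧
    ∀ u ∈ Subgroup.closure (cs.simple '' I), cs.length u ≤ cs.length w

/-- `W_{J∪K}` is the internal direct product `W_J × W_K`: the two standard parabolic
subgroups intersect trivially and commute elementwise. -/
def IsDirectProd (cs : CoxeterSystem M W) (J K : Set B) : Prop :=
  Subgroup.closure (cs.simple '' J) ⊓ Subgroup.closure (cs.simple '' K) = ⊥ ∧
    ∀ x ∈ Subgroup.closure (cs.simple '' J),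
      ∀ y ∈ Subgroup.closure (cs.simple '' K), x * y = y * x

/-- `I` is a connected subset of `S`: it is nonempty, `W_I` is finite, and `I` admits no
partition `I = J ⊔ K` into nonempty sets with `W_I = W_J × W_K`. -/
def IsConnectedSubset (cs : CoxeterSystem M W) (I : Set B) : Prop :=
  I.Nonempty ∧ (Subgroup.closure (cs.simple '' I) : Set W).Finite ∧
    ¬∃ J K : Set B, J.Nonempty ∧ K.Nonempty ∧ J ∪ K = I ∧ Disjoint J K ∧
      IsDirectProd cs J K

/-- The index type of the generators `γ_I` of the generalized cactus group: the connected
subsets of `S`. -/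
abbrev ConnIdx (cs : CoxeterSystem M W) : Type _ := {I : Set B // IsConnectedSubset cs I}

/-- The relators of the generalized cactus group `C_W`, relative to an assignment
`w : Set B → W` of longest elements: `γ_I² = 1`, and `γ_I γ_J = γ_J γ_{w_J(I)}`
whenever `I ⊆ J` or `W_{I∪J} = W_I × W_J`, where `w_J(I) = w_J I w_J⁻¹`. -/
def gcactusRels (cs : CoxeterSystem M W) (w : Set B → W) :
    Set (FreeGroup (ConnIdx cs)) :=
  {r | (∃ x : ConnIdx cs, r = .of x * .of x) ∨
    ∃ x y z : ConnIdx cs, (x.1 ⊆ y.1 ∨ IsDirectProd cs x.1 y.1) ∧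
      z.1 = {b | ∃ i ∈ x.1, w y.1 * cs.simple i * (w y.1)⁻¹ = cs.simple b} ∧
      r = .of x * .of y * (.of z)⁻¹ * (.of y)⁻¹}

/-- The generalized cactus group `C_W` of the Coxeter system `(W,S)`. -/
def GenCactusGroup (cs : CoxeterSystem M W) (w : Set B → W) : Type _ :=
  PresentedGroup (gcactusRels cs w)

instance (cs : CoxeterSystem M W) (w : Set B → W) : Group (GenCactusGroup cs w) := by
  unfold GenCactusGroup; infer_instance

section AlternatingWord

theorem prod_map_alternatingWord {G : Type*} [Monoid G] (f : B → G) (i j : B) (n : ℕ) :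
    ((alternatingWord i j (2 * n)).map f).prod = (f i * f j) ^ n := by
  induction n with
  | zero => simp [alternatingWord]
  | succ n ih =>
    rw [Nat.mul_succ, alternatingWord_succ', alternatingWord_succ']
    simp [ih, pow_succ', mul_assoc, parity_simps]

theorem reverse_alternatingWord_two_mul (i j : B) (n : ℕ) :
    (alternatingWord i j (2 * n)).reverse = alternatingWord j i (2 * n) := by
  induction n with
  | zero => simp [alternatingWord]
  | succ n ih =>
    rw [Nat.mul_succ, alternatingWord_succ', alternatingWord_succ']
    simp [ih, alternatingWord, parity_simps]

theorem leftInvSeq_alternatingWord_two_mul (cs : CoxeterSystem M W) (i j : B) (n : ℕ) :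
    cs.leftInvSeq (alternatingWord i j (2 * n)) =
      (List.range (2 * n)).map fun k ↦ cs.simple i * (cs.simple j * cs.simple i) ^ k := by
  refine List.ext_getElem (by simp) fun k hk _ ↦ ?_
  rw [cs.getElem_leftInvSeq_alternatingWord i j n k (by simpa using hk),
    prod_alternatingWord_eq_mul_pow]
  simp [parity_simps, Nat.mul_add_div]

/-- Along the word for `(s i * s j) ^ M i j`, the inversion sequence runs twice through the
reflections of the dihedral group generated by `s i` and `s j`. -/
theorem even_count_leftInvSeq_alternatingWord [DecidableEq W] (cs : CoxeterSystem M W) (i j : B)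
    (t : W) : Even ((cs.leftInvSeq (alternatingWord i j (2 * M i j))).count t) := by
  rw [leftInvSeq_alternatingWord_two_mul, two_mul, List.range_add, List.map_append,
    List.count_append, List.map_map]
  simp only [Function.comp_def, pow_add, simple_mul_simple_pow', one_mul]
  exact Even.add_self _

end AlternatingWord

section InversionParity

section Cocycle

variable [DecidableEq W] (cs : CoxeterSystem M W)

/-- The action of the generator `s i` on `W` with signs, where `ZMod 2` is the group of signs:
conjugation by `s i`, with a change of sign at `s i` itself. Restricted to reflections, this is the
action of `s i` on the roots. -/
def signedConj (i : B) : Function.End (W × ZMod 2) :=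
  fun p ↦ (cs.simple i * p.1 * cs.simple i, p.2 + if p.1 = cs.simple i then 1 else 0)

theorem signedConj_smul (i : B) (t : W) (e : ZMod 2) :
    signedConj cs i • (t, e) =
      (cs.simple i * t * cs.simple i, e + if t = cs.simple i then 1 else 0) :=
  rfl

theorem prod_map_signedConj_smul (ω : List B) (t : W) (e : ZMod 2) :
    (ω.map (signedConj cs)).prod • (t, e) =
      (cs.wordProd ω * t * (cs.wordProd ω)⁻¹, e + (cs.rightInvSeq ω).count t) := by
  induction ω with
  | nil => simp [-Function.End.smul_def]
  | cons i ω ih =>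
    have hi : cs.wordProd ω * t * (cs.wordProd ω)⁻¹ = cs.simple i ↔
        (cs.wordProd ω)⁻¹ * cs.simple i * cs.wordProd ω = t := by
      rw [mul_inv_eq_iff_eq_mul, ← eq_inv_mul_iff_mul_eq, ← mul_assoc, eq_comm]
    rw [List.map_cons, List.prod_cons, mul_smul, ih, signedConj_smul]
    simp only [hi, wordProd_cons, rightInvSeq, List.count_cons, beq_iff_eq]
    simp [mul_assoc, add_assoc]

theorem isLiftable_signedConj : M.IsLiftable (signedConj cs) := by
  intro i j
  refine FaithfulSMul.eq_of_smul_eq_smul (α := W × ZMod 2) fun ⟨t, e⟩ ↦ ?_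
  have hword : cs.wordProd (alternatingWord i j (2 * M i j)) = 1 :=
    (prod_map_alternatingWord cs.simple i j (M i j)).trans (cs.simple_mul_simple_pow i j)
  have hcount : ((cs.rightInvSeq (alternatingWord i j (2 * M i j))).count t : ZMod 2) = 0 := by
    rw [← reverse_alternatingWord_two_mul, cs.rightInvSeq_reverse, List.count_reverse, M.symmetric,
      ZMod.natCast_eq_zero_iff_even]
    exact even_count_leftInvSeq_alternatingWord cs j i t
  rw [← prod_map_alternatingWord, prod_map_signedConj_smul, hword, hcount, one_smul]
  simp

theorem lift_signedConj_wordProd (ω : List B) :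
    cs.lift ⟨signedConj cs, isLiftable_signedConj cs⟩ (cs.wordProd ω) =
      (ω.map (signedConj cs)).prod := by
  simp [wordProd, map_list_prod, Function.comp_def]

/-- The parity of the number of occurrences of `t` in the right inversion sequence of a word for
`w`, read off from the action of `w` on `W × ZMod 2` so that it visibly depends on `w` alone. -/
noncomputable def inversionParity (w t : W) : ZMod 2 :=
  (cs.lift ⟨signedConj cs, isLiftable_signedConj cs⟩ w • (t, (0 : ZMod 2))).2

theorem inversionParity_wordProd (ω : List B) (t : W) :
    inversionParity cs (cs.wordProd ω) t = (cs.rightInvSeq ω).count t := by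
  rw [inversionParity, lift_signedConj_wordProd, prod_map_signedConj_smul, zero_add]

theorem lift_signedConj_smul (w t : W) (e : ZMod 2) :
    cs.lift ⟨signedConj cs, isLiftable_signedConj cs⟩ w • (t, e) =
      (w * t * w⁻¹, e + inversionParity cs w t) := by
  obtain ⟨ω, rfl⟩ := cs.wordProd_surjective w
  rw [lift_signedConj_wordProd, prod_map_signedConj_smul, inversionParity_wordProd]

theorem inversionParity_one (t : W) : inversionParity cs 1 t = 0 := by
  simpa using inversionParity_wordProd cs [] t

theorem inversionParity_simple_self (i : B) :
    inversionParity cs (cs.simple i) (cs.simple i) = 1 := by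
  simpa using inversionParity_wordProd cs [i] (cs.simple i)

theorem inversionParity_mul (u v t : W) :
    inversionParity cs (u * v) t =
      inversionParity cs v t + inversionParity cs u (v * t * v⁻¹) := by
  rw [inversionParity, map_mul, mul_smul, lift_signedConj_smul, lift_signedConj_smul, zero_add]

theorem inversionParity_self {t : W} (ht : cs.IsReflection t) : inversionParity cs t t = 1 := by
  obtain ⟨u, i, rfl⟩ := ht
  have hconj : u⁻¹ * (u * cs.simple i * u⁻¹) * u⁻¹⁻¹ = cs.simple i := by group
  have hcancel : inversionParity cs u⁻¹ (u * cs.simple i * u⁻¹) +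
      inversionParity cs u (cs.simple i) = 0 := by
    have h := inversionParity_mul cs u u⁻¹ (u * cs.simple i * u⁻¹)
    rwa [mul_inv_cancel, inversionParity_one, hconj, eq_comm] at h
  rw [inversionParity_mul, hconj, inversionParity_mul, mul_inv_cancel_right,
    inversionParity_simple_self]
  linear_combination hcancel

theorem isRightInversion_of_inversionParity_eq_one {w t : W} (h : inversionParity cs w t = 1) :
    cs.IsRightInversion w t := by
  obtain ⟨ω, hω, rfl⟩ := cs.exists_isReduced w
  refine cs.isRightInversion_of_mem_rightInvSeq hω (by_contra fun ht ↦ ?_)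
  simp [inversionParity_wordProd, List.count_eq_zero.2 ht] at h

theorem inversionParity_eq_one_iff {w t : W} (ht : cs.IsReflection t) :
    inversionParity cs w t = 1 ↔ cs.IsRightInversion w t := by
  refine ⟨isRightInversion_of_inversionParity_eq_one cs, fun hwt ↦ ?_⟩
  by_contra h
  have h0 : inversionParity cs w t = 0 := (by decide : ∀ a : ZMod 2, a ≠ 1 → a = 0) _ h
  have hmul : inversionParity cs (w * t) t = 1 := by
    rw [inversionParity_mul, mul_inv_cancel_right, inversionParity_self cs ht, h0, add_zero]
  exact ht.isRightInversion_mul_left_iff.1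
    (isRightInversion_of_inversionParity_eq_one cs hmul) hwt

end Cocycle

theorem isRightInversion_mul_iff (cs : CoxeterSystem M W) {u v t : W} (ht : cs.IsReflection t) :
    cs.IsRightInversion (u * v) t ↔
      Xor (cs.IsRightInversion v t) (cs.IsRightInversion u (v * t * v⁻¹)) := by
  have hadd (a b : ZMod 2) : a + b = 1 ↔ Xor (a = 1) (b = 1) := by
    revert a b
    decide
  classical
  rw [← inversionParity_eq_one_iff cs ht, ← inversionParity_eq_one_iff cs ht,
    ← inversionParity_eq_one_iff cs (ht.conj v), inversionParity_mul, hadd]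

end InversionParity

section StandardParabolic

/-- The standard parabolic subgroup `W_I`, a name for the closure used in the statement. -/
abbrev standardParabolic (cs : CoxeterSystem M W) (I : Set B) : Subgroup W :=
  Subgroup.closure (cs.simple '' I)

theorem simple_mem_standardParabolic (cs : CoxeterSystem M W) {I : Set B} {i : B} (hi : i ∈ I) :
    cs.simple i ∈ standardParabolic cs I :=
  Subgroup.subset_closure (Set.mem_image_of_mem _ hi)

theorem standardParabolic_mono (cs : CoxeterSystem M W) {I J : Set B} (hIJ : I ⊆ J) :
    standardParabolic cs I ≤ standardParabolic cs J :=
  Subgroup.closure_mono (Set.image_mono hIJ)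

theorem standardParabolic_singleton (cs : CoxeterSystem M W) (i : B) :
    (standardParabolic cs {i} : Set W) = {1, cs.simple i} := by
  ext x
  rw [standardParabolic, Set.image_singleton, ← Subgroup.zpowers_eq_closure, SetLike.mem_coe]
  constructor
  · rintro ⟨k, rfl⟩
    rcases Int.even_or_odd' k with ⟨n, rfl | rfl⟩ <;> simp [zpow_add, zpow_mul, zpow_ofNat]
  · rintro (rfl | rfl)
    exacts [one_mem _, Subgroup.mem_zpowers _]

/-- The index set of the simple reflections in `v I v⁻¹`, written `w_J(I)` when `v = w_J`. The
elements of `v I v⁻¹` that are not simple reflections are dropped. -/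
def conjIndices (cs : CoxeterSystem M W) (v : W) (I : Set B) : Set B :=
  {b | ∃ i ∈ I, v * cs.simple i * v⁻¹ = cs.simple b}

theorem standardParabolic_conjIndices (cs : CoxeterSystem M W) {v : W} {I : Set B}
    (hv : ∀ i ∈ I, cs.length (v * cs.simple i * v⁻¹) = 1) :
    standardParabolic cs (conjIndices cs v I) =
      (standardParabolic cs I).map (MulAut.conj v).toMonoidHom := by
  rw [standardParabolic, standardParabolic, MonoidHom.map_closure, Set.image_image]
  congr 1
  ext x
  constructor
  · rintro ⟨b, ⟨i, hi, hib⟩, rfl⟩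
    exact ⟨i, hi, hib⟩
  · rintro ⟨i, hi, rfl⟩
    obtain ⟨b, hb⟩ := cs.length_eq_one_iff.1 (hv i hi)
    exact ⟨b, ⟨i, hi, hb⟩, hb.symm⟩

end StandardParabolic

namespace IsLongestElementOf

variable {cs : CoxeterSystem M W} {I J : Set B} {w w' : W}

theorem isRightInversion (hw : IsLongestElementOf cs I w) {t : W} (ht : cs.IsReflection t)
    (htI : t ∈ standardParabolic cs I) : cs.IsRightInversion w t :=
  ⟨ht, (hw.2 _ (mul_mem hw.1 htI)).lt_of_ne (ht.length_mul_left_ne w)⟩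

theorem isRightDescent_mul_iff (hw : IsLongestElementOf cs I w) {u : W}
    (hu : u ∈ standardParabolic cs I) {i : B} (hi : i ∈ I) :
    cs.IsRightDescent (w * u) i ↔ ¬cs.IsRightDescent u i := by
  have hs := cs.isReflection_simple i
  have hinv : cs.IsRightInversion w (u * cs.simple i * u⁻¹) :=
    hw.isRightInversion (hs.conj u)
      (mul_mem (mul_mem hu (simple_mem_standardParabolic cs hi)) (inv_mem hu))
  rw [← isRightInversion_simple_iff_isRightDescent, isRightInversion_mul_iff cs hs,
    isRightInversion_simple_iff_isRightDescent]
  simp [hinv, Xor]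

theorem length_mul_add_length (hw : IsLongestElementOf cs I w) {u : W}
    (hu : u ∈ standardParabolic cs I) : cs.length (w * u) + cs.length u = cs.length w := by
  have mul_simple {u : W} {i : B} (hu : u ∈ standardParabolic cs I) (hi : i ∈ I)
      (ih : cs.length (w * u) + cs.length u = cs.length w) :
      cs.length (w * (u * cs.simple i)) + cs.length (u * cs.simple i) = cs.length w := by
    have hdesc := hw.isRightDescent_mul_iff hu hi
    rw [← mul_assoc]
    by_cases hui : cs.IsRightDescent u i
    · have h₁ := cs.not_isRightDescent_iff.1 (hdesc.not.2 (not_not.2 hui))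
      have h₂ := cs.isRightDescent_iff.1 hui
      lia
    · have h₁ := cs.isRightDescent_iff.1 (hdesc.2 hui)
      have h₂ := cs.not_isRightDescent_iff.1 hui
      lia
  induction hu using Subgroup.closure_induction_right with
  | one => simp
  | mul_right u hu s hs ih =>
    obtain ⟨i, hi, rfl⟩ := hs
    exact mul_simple hu hi ih
  | mul_inv_cancel u hu s hs ih =>
    obtain ⟨i, hi, rfl⟩ := hs
    rw [inv_simple]
    exact mul_simple hu hi ih

theorem inv (hw : IsLongestElementOf cs I w) : IsLongestElementOf cs I w⁻¹ :=
  ⟨inv_mem hw.1, fun u hu ↦ by simpa using hw.2 u hu⟩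

theorem unique (hw : IsLongestElementOf cs I w) (hw' : IsLongestElementOf cs I w') : w = w' := by
  have hadd := hw.length_mul_add_length (mul_mem (inv_mem hw.1) hw'.1)
  rw [mul_inv_cancel_left] at hadd
  have hzero : cs.length (w⁻¹ * w') = 0 := by
    have := hw'.2 w hw.1
    lia
  exact inv_mul_eq_one.1 (cs.length_eq_zero_iff.1 hzero)

theorem mul_self (hw : IsLongestElementOf cs I w) : w * w = 1 :=
  mul_eq_one_iff_eq_inv.2 (hw.unique hw.inv)

theorem length_conj (hw : IsLongestElementOf cs I w) {u : W} (hu : u ∈ standardParabolic cs I) :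
    cs.length (w * u * w⁻¹) = cs.length u := by
  have hmul := hw.length_mul_add_length hu
  have hinv := hw.length_mul_add_length (inv_mem (mul_mem hw.1 hu))
  rw [← cs.length_inv (w * (w * u)⁻¹), mul_inv_rev, inv_inv, cs.length_inv] at hinv
  lia

theorem length_conj_of_subset_or_isDirectProd (hw : IsLongestElementOf cs J w)
    (hIJ : I ⊆ J ∨ IsDirectProd cs I J) {u : W} (hu : u ∈ standardParabolic cs I) :
    cs.length (w * u * w⁻¹) = cs.length u := by
  rcases hIJ with hsub | hprod
  · exact hw.length_conj (standardParabolic_mono cs hsub hu)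
  · rw [← hprod.2 u hu w hw.1, mul_inv_cancel_right]

theorem conj (hw : IsLongestElementOf cs I w) {v : W}
    (hv : ∀ u ∈ standardParabolic cs I, cs.length (v * u * v⁻¹) = cs.length u) :
    IsLongestElementOf cs (conjIndices cs v I) (v * w * v⁻¹) := by
  have hsimple (i : B) (hi : i ∈ I) : cs.length (v * cs.simple i * v⁻¹) = 1 := by
    rw [hv _ (simple_mem_standardParabolic cs hi), cs.length_simple]
  rw [IsLongestElementOf, ← standardParabolic, standardParabolic_conjIndices cs hsimple]
  refine ⟨⟨w, hw.1, rfl⟩, ?_⟩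
  rintro _ ⟨u, hu, rfl⟩
  calc cs.length (v * u * v⁻¹) = cs.length u := hv u hu
    _ ≤ cs.length w := hw.2 u hu
    _ = cs.length (v * w * v⁻¹) := (hv w hw.1).symm

theorem mul_eq_mul_of_conjIndices (hw : IsLongestElementOf cs I w) {v : W}
    (hv : IsLongestElementOf cs J v) (hIJ : I ⊆ J ∨ IsDirectProd cs I J)
    (hw' : IsLongestElementOf cs (conjIndices cs v I) w') : w * v = v * w' := by
  have hconj : w' = v * w * v⁻¹ :=
    hw'.unique (hw.conj fun _ ↦ hv.length_conj_of_subset_or_isDirectProd hIJ)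
  have hinv : v⁻¹ = v := (mul_eq_one_iff_eq_inv.1 hv.mul_self).symm
  calc w * v = v * v * (w * v) := by rw [hv.mul_self, one_mul]
    _ = v * (v * w * v⁻¹) := by rw [hinv]; simp only [mul_assoc]
    _ = v * w' := by rw [hconj]

end IsLongestElementOf

theorem isLongestElementOf_singleton (cs : CoxeterSystem M W) (i : B) :
    IsLongestElementOf cs {i} (cs.simple i) := by
  refine ⟨simple_mem_standardParabolic cs rfl, fun u hu ↦ ?_⟩
  rw [← SetLike.mem_coe, standardParabolic_singleton cs i] at hu
  rcases hu with rfl | rfl <;> simp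

theorem isConnectedSubset_singleton (cs : CoxeterSystem M W) (i : B) :
    IsConnectedSubset cs {i} := by
  refine ⟨Set.singleton_nonempty i, ?_, ?_⟩
  · rw [standardParabolic_singleton cs i]
    exact Set.toFinite _
  · rintro ⟨J, K, hJ, hK, hJK, hdisj, -⟩
    have hJi : J = {i} := hJ.subset_singleton_iff.1 (hJK ▸ Set.subset_union_left)
    have hKi : K = {i} := hK.subset_singleton_iff.1 (hJK ▸ Set.subset_union_right)
    simp [hJi, hKi] at hdisj

namespace GenCactusGroup

variable {cs : CoxeterSystem M W} {w : Set B → W}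

theorem lift_eq_one_of_mem_gcactusRels
    (hw : ∀ I : Set B, IsConnectedSubset cs I → IsLongestElementOf cs I (w I))
    {r : FreeGroup (ConnIdx cs)} (hr : r ∈ gcactusRels cs w) :
    FreeGroup.lift (fun x : ConnIdx cs ↦ w x.1) r = 1 := by
  rcases hr with ⟨x, rfl⟩ | ⟨x, y, z, hxy, hz, rfl⟩
  · simpa using (hw x.1 x.2).mul_self
  · have hcomm : w x.1 * w y.1 = w y.1 * w z.1 :=
      (hw x.1 x.2).mul_eq_mul_of_conjIndices (hw y.1 y.2) hxy (hz ▸ hw z.1 z.2)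
    simp [hcomm]

/-- The homomorphism `g_W : C_W → W`, `γ_I ↦ w_I`, for a choice `w` of longest elements. -/
def toCoxeter (hw : ∀ I : Set B, IsConnectedSubset cs I → IsLongestElementOf cs I (w I)) :
    GenCactusGroup cs w →* W :=
  PresentedGroup.toGroup fun _ ↦ lift_eq_one_of_mem_gcactusRels hw

theorem toCoxeter_of (hw : ∀ I : Set B, IsConnectedSubset cs I → IsLongestElementOf cs I (w I))
    (x : ConnIdx cs) : toCoxeter hw (PresentedGroup.of x) = w x.1 :=
  PresentedGroup.toGroup.of _

theorem toCoxeter_surjective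
    (hw : ∀ I : Set B, IsConnectedSubset cs I → IsLongestElementOf cs I (w I)) :
    Function.Surjective (toCoxeter hw) := by
  rw [← MonoidHom.range_eq_top, eq_top_iff, ← cs.subgroup_closure_range_simple,
    Subgroup.closure_le]
  rintro _ ⟨i, rfl⟩
  have hi := isConnectedSubset_singleton cs i
  have hwi : w {i} = cs.simple i := (hw _ hi).unique (isLongestElementOf_singleton cs i)
  exact ⟨PresentedGroup.of ⟨{i}, hi⟩, (toCoxeter_of hw ⟨{i}, hi⟩).trans hwi⟩

end GenCactusGroup

/-- the map `γ_I ↦ w_I` (the longest element of `W_I`) extends to a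
surjective group homomorphism `g_W : C_W → W`. -/
theorem gen_cactus_to_coxeter (cs : CoxeterSystem M W) (w : Set B → W)
    (hw : ∀ I : Set B, IsConnectedSubset cs I → IsLongestElementOf cs I (w I)) :
    ∃ g : GenCactusGroup cs w →* W,
      (∀ x : ConnIdx cs, g (PresentedGroup.of x) = w x.1) ∧ Function.Surjective g :=
  ⟨GenCactusGroup.toCoxeter hw, GenCactusGroup.toCoxeter_of hw,
    GenCactusGroup.toCoxeter_surjective hw⟩
end

section
/- Let W be the Coxeter group of type A_{n−1} (so W ≅ S_n). Then the generalized cactus group C_W is isomorphic to the cactus group J_n, via the map sending s_{p,q} to γ_{{s_p,…,s_{q−1}}}. -/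
open CoxeterSystem

/-- The index set of generators `s_{p,q}` of the cactus group `J_n`. -/
def CactusIdx (n : ℕ) : Type :=
  {pq : ℕ × ℕ // 1 ≤ pq.1 ∧ pq.1 < pq.2 ∧ pq.2 ≤ n}

/-- The relators of the cactus group `J_n`. -/
def cactusRels (n : ℕ) : Set (FreeGroup (CactusIdx n)) :=
  {w | (∃ x : CactusIdx n, w = .of x * .of x) ∨
    (∃ x y : CactusIdx n, Disjoint (Set.Icc x.1.1 x.1.2) (Set.Icc y.1.1 y.1.2) ∧
      w = .of x * .of y * (.of x)⁻¹ * (.of y)⁻¹) ∨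
    (∃ x y z : CactusIdx n, x.1.1 ≤ y.1.1 ∧ y.1.2 ≤ x.1.2 ∧
      z.1.1 = x.1.1 + x.1.2 - y.1.2 ∧ z.1.2 = x.1.1 + x.1.2 - y.1.1 ∧
      w = .of x * .of y * (.of x)⁻¹ * (.of z)⁻¹)}

/-- The cactus group `J_n`. -/
def CactusGroup (n : ℕ) : Type := PresentedGroup (cactusRels n)

instance (n : ℕ) : Group (CactusGroup n) := by unfold CactusGroup; infer_instance

variable {B W : Type*} [Group W] {M : CoxeterMatrix B}

/-!
In type `A`, the descents of a group element are exactly the descents of the permutation obtained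
by sending the simple reflections to the adjacent transpositions. Hence this permutation
representation is faithful, and the longest element of the parabolic subgroup of an interval of
simple reflections acts by reversing the corresponding interval of points. Faithfulness identifies
the connected sets of simple reflections with the nonempty intervals, and the direct products with
the pairs of separated intervals; conjugation by a longest element is the reflection of intervals
occurring in the nesting relation. So the two presentations have the same generators, and their
relations differ only by the involution that exchanges a nested interval with its reflection.
-/

/-! ### Descents in a general Coxeter group -/

section General

lemma simple_commute_of_eq_two (cs : CoxeterSystem M W) {i j : B} (h : M i j = 2) :
    Commute (cs.simple i) (cs.simple j) := by
  have hij := cs.simple_mul_simple_pow i j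
  rw [h, pow_two] at hij
  exact (eq_inv_of_mul_eq_one_left hij).trans (by simp)

lemma simple_braid_of_eq_three (cs : CoxeterSystem M W) {i j : B} (h : M i j = 3) :
    cs.simple i * cs.simple j * cs.simple i = cs.simple j * cs.simple i * cs.simple j := by
  have hij : (cs.simple i * cs.simple j * cs.simple i) *
      (cs.simple j * cs.simple i * cs.simple j) = 1 := by
    simpa only [h, pow_succ, pow_zero, one_mul, mul_assoc] using cs.simple_mul_simple_pow i j
  simpa [mul_assoc] using eq_inv_of_mul_eq_one_left hij

variable {cs : CoxeterSystem M W} {u : W} {i j : B}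

lemma not_isRightDescent_mul_simple_of_commute (hcomm : Commute (cs.simple i) (cs.simple j))
    (hi : ¬cs.IsRightDescent u i) (hj : cs.IsRightDescent u j) :
    ¬cs.IsRightDescent (u * cs.simple j) i := by
  intro h
  have hle := cs.length_mul_le (u * cs.simple j * cs.simple i) (cs.simple j)
  rw [mul_assoc u, ← hcomm.eq, ← mul_assoc, cs.simple_mul_simple_cancel_right, mul_assoc u,
    hcomm.eq, ← mul_assoc, cs.length_simple] at hle
  rw [cs.isRightDescent_iff] at hj h
  rw [cs.not_isRightDescent_iff] at hi
  omega

lemma not_isRightDescent_mul_simple_mul_simple_of_braid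
    (hbraid : cs.simple i * cs.simple j * cs.simple i = cs.simple j * cs.simple i * cs.simple j)
    (hi : ¬cs.IsRightDescent u i) (hj : cs.IsRightDescent u j)
    (hji : cs.IsRightDescent (u * cs.simple j) i) :
    ¬cs.IsRightDescent (u * cs.simple j * cs.simple i) j := by
  intro h
  have hu : u * cs.simple i =
      u * cs.simple j * cs.simple i * cs.simple j * cs.simple i * cs.simple j := by
    have hbraid' := congrArg (u * cs.simple j * cs.simple i * ·) hbraid
    simpa [← mul_assoc] using hbraid'
  have hle := cs.length_mul_le (u * cs.simple j * cs.simple i * cs.simple j)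
    (cs.simple i * cs.simple j)
  have hle' := cs.length_mul_le (cs.simple i) (cs.simple j)
  rw [← mul_assoc, ← hu] at hle
  rw [cs.length_simple, cs.length_simple] at hle'
  rw [cs.isRightDescent_iff] at hj hji h
  rw [cs.not_isRightDescent_iff] at hi
  omega

lemma IsLongestElementOf.isRightDescent {I : Set B} (hu : IsLongestElementOf cs I u)
    (hi : i ∈ I) : cs.IsRightDescent u i := by
  by_contra hdesc
  have hle := hu.2 _ (mul_mem hu.1 (Subgroup.subset_closure (Set.mem_image_of_mem _ hi)))
  rw [cs.not_isRightDescent_iff] at hdesc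
  omega

end General

/-! ### The Coxeter group of type `A` as a group of permutations -/

section AdjSwap

variable {m : ℕ} {σ : Equiv.Perm (Fin (m + 1))} {i j : Fin m}

/-- The adjacent transposition exchanging `i` and `i + 1`, the image in the symmetric group of the
`i`-th simple reflection of type `A`. -/
def adjSwap (i : Fin m) : Equiv.Perm (Fin (m + 1)) := Equiv.swap i.castSucc i.succ

@[simp]
lemma adjSwap_castSucc (i : Fin m) : adjSwap i i.castSucc = i.succ := Equiv.swap_apply_left _ _

@[simp]
lemma adjSwap_succ (i : Fin m) : adjSwap i i.succ = i.castSucc := Equiv.swap_apply_right _ _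

lemma adjSwap_of_ne {t : Fin (m + 1)} (h : (t : ℕ) ≠ i) (h' : (t : ℕ) ≠ i + 1) :
    adjSwap i t = t :=
  Equiv.swap_apply_of_ne_of_ne (Fin.ne_of_val_ne h) (Fin.ne_of_val_ne h')

lemma adjSwap_castSucc_of_ne (h : i ≠ j) (h' : (j : ℕ) + 1 ≠ i) :
    adjSwap j i.castSucc = i.castSucc :=
  adjSwap_of_ne (Fin.val_ne_of_ne h) h'.symm

lemma adjSwap_succ_of_ne (h : i ≠ j) (h' : (i : ℕ) + 1 ≠ j) : adjSwap j i.succ = i.succ :=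
  adjSwap_of_ne h' (Nat.succ_ne_succ_iff.2 (Fin.val_ne_of_ne h))

lemma adjSwap_injective : Function.Injective (adjSwap (m := m)) := by
  intro i j h
  by_contra hne
  by_cases hadj : (i : ℕ) + 1 = j
  · have hi := adjSwap_castSucc_of_ne hne (by omega)
    rw [← h, adjSwap_castSucc] at hi
    exact Fin.castSucc_lt_succ.ne' hi
  · have hi := adjSwap_succ_of_ne hne hadj
    rw [← h, adjSwap_succ] at hi
    exact Fin.castSucc_lt_succ.ne hi

lemma adjSwap_commute (h : (i : ℕ) + 1 < j ∨ (j : ℕ) + 1 < i) :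
    Commute (adjSwap i) (adjSwap j) := by
  refine (Equiv.Perm.disjoint_swap_swap ?_).commute
  simp only [List.nodup_cons, List.mem_cons, List.not_mem_nil, Fin.ext_iff, Fin.val_castSucc,
    Fin.val_succ, List.nodup_nil]
  grind

lemma not_commute_adjSwap (h : (i : ℕ) + 1 = j) : ¬Commute (adjSwap i) (adjSwap j) := by
  intro hcomm
  have hij : i.succ = j.castSucc := Fin.ext h
  have hi : adjSwap j i.castSucc = i.castSucc :=
    adjSwap_castSucc_of_ne (Fin.ne_of_val_ne (by omega)) (by omega)
  have heq : i.succ = j.succ := by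
    simpa [hi, hij] using Equiv.congr_fun hcomm.eq i.castSucc
  exact Fin.castSucc_lt_succ.ne (hij.symm.trans heq)

lemma adjSwap_mul_adjSwap_pow_three (h : (i : ℕ) + 1 = j ∨ (j : ℕ) + 1 = i) :
    (adjSwap i * adjSwap j) ^ 3 = 1 := by
  have key {a b : Fin m} (hab : (a : ℕ) + 1 = b) : (adjSwap a * adjSwap b).IsThreeCycle := by
    have hab' : a.succ = b.castSucc := Fin.ext hab
    have hlt : a.castSucc < b.succ := Fin.lt_def.2 (by rw [Fin.val_castSucc, Fin.val_succ]; omega)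
    rw [adjSwap, adjSwap, ← hab', Equiv.swap_comm]
    exact Equiv.Perm.isThreeCycle_swap_mul_swap_same Fin.castSucc_lt_succ.ne'
      (hab' ▸ Fin.castSucc_lt_succ.ne) hlt.ne
  suffices (adjSwap i * adjSwap j).IsThreeCycle from this.orderOf ▸ pow_orderOf_eq_one _
  obtain h | h := h
  · exact key h
  · simpa [adjSwap] using (key h).inv

/-- The position `i` is an ascent of the permutation `σ` if `σ i < σ (i + 1)`. -/
def IsAscent (σ : Equiv.Perm (Fin (m + 1))) (i : Fin m) : Prop := σ i.castSucc < σ i.succ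

lemma isAscent_one (i : Fin m) : IsAscent 1 i := Fin.castSucc_lt_succ

lemma isAscent_mul_adjSwap_self_iff : IsAscent (σ * adjSwap i) i ↔ ¬IsAscent σ i := by
  have hne : σ i.castSucc ≠ σ i.succ := σ.injective.ne Fin.castSucc_lt_succ.ne
  simp only [IsAscent, Equiv.Perm.mul_apply, adjSwap_castSucc, adjSwap_succ, not_lt]
  exact hne.symm.le_iff_lt.symm

lemma IsAscent.mul_adjSwap_of_not_adjacent (hi : IsAscent σ i) (hne : i ≠ j)
    (h : (i : ℕ) + 1 ≠ j) (h' : (j : ℕ) + 1 ≠ i) : IsAscent (σ * adjSwap j) i := by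
  rwa [IsAscent, Equiv.Perm.mul_apply, Equiv.Perm.mul_apply, adjSwap_castSucc_of_ne hne h',
    adjSwap_succ_of_ne hne h]

lemma IsAscent.mul_adjSwap_of_adjacent (hi : IsAscent σ i) (hj : IsAscent σ j)
    (h : (i : ℕ) + 1 = j ∨ (j : ℕ) + 1 = i) : IsAscent (σ * adjSwap j) i := by
  have hne : i ≠ j := by rintro rfl; omega
  rw [IsAscent, Equiv.Perm.mul_apply, Equiv.Perm.mul_apply]
  obtain h | h := h
  · have hij : i.succ = j.castSucc := Fin.ext h
    rw [adjSwap_castSucc_of_ne hne (by omega), hij, adjSwap_castSucc]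
    exact hi.trans (hij ▸ hj)
  · have hij : j.succ = i.castSucc := Fin.ext h
    rw [adjSwap_succ_of_ne hne (by omega), ← hij, adjSwap_succ]
    exact hj.trans (hij ▸ hi)

lemma IsAscent.mul_adjSwap_mul_adjSwap_of_adjacent (hj : IsAscent σ j)
    (h : (i : ℕ) + 1 = j ∨ (j : ℕ) + 1 = i) : IsAscent (σ * adjSwap i * adjSwap j) i := by
  have hne : i ≠ j := by rintro rfl; omega
  simp only [IsAscent, Equiv.Perm.mul_apply]
  obtain h | h := h
  · have hij : i.succ = j.castSucc := Fin.ext h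
    rwa [adjSwap_castSucc_of_ne hne (by omega), adjSwap_castSucc, hij, adjSwap_castSucc,
      adjSwap_succ_of_ne hne.symm (by omega)]
  · have hij : j.succ = i.castSucc := Fin.ext h
    rwa [← hij, adjSwap_succ, adjSwap_castSucc_of_ne hne.symm (by omega),
      adjSwap_succ_of_ne hne (by omega), adjSwap_succ, ← hij]

lemma coe_apply_add_eq_of_not_isAscent {a b t : Fin (m + 1)}
    (hmaps : Set.MapsTo σ (Set.Icc a b) (Set.Icc a b))
    (hdesc : ∀ i : Fin m, a ≤ i.castSucc → i.succ ≤ b → ¬IsAscent σ i)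
    (ht : t ∈ Set.Icc a b) : (σ t : ℕ) + t = a + b := by
  have hanti : AntitoneOn (fun s ↦ (σ s : ℕ) + s) (Set.Icc a b) := by
    refine antitoneOn_of_succ_le Set.ordConnected_Icc fun s hs hsI hsI' ↦ ?_
    obtain ⟨i, rfl⟩ := Fin.exists_castSucc_eq.2 fun h : s = Fin.last m ↦ hs (h ▸ isMax_top)
    rw [Fin.orderSucc_castSucc] at hsI' ⊢
    have hlt := isAscent_mul_adjSwap_self_iff.2 (hdesc i hsI.1 hsI'.2)
    simp only [IsAscent, Equiv.Perm.mul_apply, adjSwap_castSucc, adjSwap_succ, Fin.lt_def] at hlt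
    simp only [Fin.val_castSucc, Fin.val_succ]
    omega
  have hab := ht.1.trans ht.2
  have hle := hanti ⟨le_rfl, hab⟩ ht ht.1
  have hge := hanti ht ⟨hab, le_rfl⟩ ht.2
  have ha := Fin.le_def.1 (hmaps ⟨le_rfl, hab⟩).2
  have hb := Fin.le_def.1 (hmaps ⟨hab, le_rfl⟩).1
  dsimp only at hle hge
  omega

end AdjSwap

section TypeA

variable {m : ℕ}

lemma coxeterMatrixA_apply_of_adjacent {i j : Fin m} (h : (i : ℕ) + 1 = j ∨ (j : ℕ) + 1 = i) :
    CoxeterMatrix.A m i j = 3 := by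
  change (if i = j then 1 else if (j : ℕ) + 1 = i ∨ (i : ℕ) + 1 = j then 3 else 2) = 3
  rw [if_neg (by rintro rfl; omega), if_pos h.symm]

lemma coxeterMatrixA_apply_of_far {i j : Fin m} (h : (i : ℕ) + 1 < j ∨ (j : ℕ) + 1 < i) :
    CoxeterMatrix.A m i j = 2 := by
  change (if i = j then 1 else if (j : ℕ) + 1 = i ∨ (i : ℕ) + 1 = j then 3 else 2) = 2
  rw [if_neg (by rintro rfl; omega), if_neg (by omega)]

lemma eq_or_adjacent_or_far (i j : Fin m) :
    i = j ∨ ((i : ℕ) + 1 = j ∨ (j : ℕ) + 1 = i) ∨ ((i : ℕ) + 1 < j ∨ (j : ℕ) + 1 < i) := by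
  rw [Fin.ext_iff]
  omega

lemma isLiftable_adjSwap (m : ℕ) : (CoxeterMatrix.A m).IsLiftable adjSwap := by
  intro i j
  obtain rfl | h | h := eq_or_adjacent_or_far i j
  · simp [adjSwap]
  · rw [coxeterMatrixA_apply_of_adjacent h, adjSwap_mul_adjSwap_pow_three h]
  · rw [coxeterMatrixA_apply_of_far h, (adjSwap_commute h).mul_pow]
    simp [adjSwap, pow_two]

/-- The permutation representation of the Coxeter group of type `A_m` on `Fin (m + 1)`, sending
the simple reflections to the adjacent transpositions. -/
noncomputable def permHom (cs : CoxeterSystem (CoxeterMatrix.A m) W) :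
    W →* Equiv.Perm (Fin (m + 1)) :=
  cs.lift ⟨adjSwap, isLiftable_adjSwap m⟩

variable (cs : CoxeterSystem (CoxeterMatrix.A m) W)

@[simp]
lemma permHom_simple (i : Fin m) : permHom cs (cs.simple i) = adjSwap i :=
  cs.lift_apply_simple (isLiftable_adjSwap m) i

variable {cs}

lemma simple_commute_of_far {i j : Fin m} (h : (i : ℕ) + 1 < j ∨ (j : ℕ) + 1 < i) :
    Commute (cs.simple i) (cs.simple j) :=
  simple_commute_of_eq_two cs (coxeterMatrixA_apply_of_far h)

/- By induction on the length: peel off a right descent `j` of `u`, and when `j` is adjacent to `i`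
possibly a second factor `s_i`, until the remaining element has no descent at `i` or `j`. -/
lemma isAscent_permHom_of_not_isRightDescent {u : W} {i : Fin m}
    (hi : ¬cs.IsRightDescent u i) : IsAscent (permHom cs u) i := by
  induction hn : cs.length u using Nat.strong_induction_on generalizing u i with
  | _ n ih =>
  subst hn
  obtain rfl | hu := eq_or_ne u 1
  · simpa using isAscent_one i
  obtain ⟨j, hj⟩ := cs.exists_rightDescent_of_ne_one hu
  have hne : i ≠ j := by rintro rfl; exact hi hj
  have hvj := (cs.isRightDescent_iff_not_isRightDescent_mul).1 hj
  have hu_eq : permHom cs u = permHom cs (u * cs.simple j) * adjSwap j := by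
    rw [← permHom_simple cs, ← map_mul, cs.simple_mul_simple_cancel_right]
  rw [hu_eq]
  obtain h | h | h := eq_or_adjacent_or_far i j
  · exact absurd h hne
  · by_cases hvi : cs.IsRightDescent (u * cs.simple j) i
    · have hbraid := simple_braid_of_eq_three cs (coxeterMatrixA_apply_of_adjacent h)
      have hvij := not_isRightDescent_mul_simple_mul_simple_of_braid hbraid hi hj hvi
      have hv_eq : permHom cs (u * cs.simple j) =
          permHom cs (u * cs.simple j * cs.simple i) * adjSwap i := by
        rw [← permHom_simple cs, ← map_mul, cs.simple_mul_simple_cancel_right]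
      rw [hv_eq]
      exact (ih _ (hvi.trans hj) hvij rfl).mul_adjSwap_mul_adjSwap_of_adjacent h
    · exact (ih _ hj hvi rfl).mul_adjSwap_of_adjacent (ih _ hj hvj rfl) h
  · have hvi := not_isRightDescent_mul_simple_of_commute (simple_commute_of_far h) hi hj
    exact (ih _ hj hvi rfl).mul_adjSwap_of_not_adjacent hne (by omega) (by omega)

lemma isRightDescent_iff_not_isAscent_permHom {u : W} {i : Fin m} :
    cs.IsRightDescent u i ↔ ¬IsAscent (permHom cs u) i := by
  refine ⟨fun h ↦ ?_, fun h ↦ not_not.1 (mt isAscent_permHom_of_not_isRightDescent h)⟩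
  have hasc := isAscent_permHom_of_not_isRightDescent
    ((cs.isRightDescent_iff_not_isRightDescent_mul).1 h)
  rwa [map_mul, permHom_simple, isAscent_mul_adjSwap_self_iff] at hasc

variable (cs)

lemma permHom_injective : Function.Injective (permHom cs) := by
  refine (injective_iff_map_eq_one _).2 fun u hu ↦ by_contra fun hne ↦ ?_
  obtain ⟨i, hi⟩ := cs.exists_rightDescent_of_ne_one hne
  exact isRightDescent_iff_not_isAscent_permHom.1 hi (hu ▸ isAscent_one i)

include cs in
lemma finite_of_typeA : Finite W := Finite.of_injective _ (permHom_injective cs)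

lemma simple_injective_of_typeA : Function.Injective cs.simple :=
  .of_comp (f := permHom cs) (by simpa [Function.comp_def] using adjSwap_injective)

variable {cs}

lemma permHom_apply_of_mem_closure {I : Set (Fin m)} {u : W}
    (hu : u ∈ Subgroup.closure (cs.simple '' I)) {t : Fin (m + 1)}
    (ht : ∀ i ∈ I, (t : ℕ) ≠ i ∧ (t : ℕ) ≠ i + 1) : permHom cs u t = t := by
  suffices Subgroup.closure (cs.simple '' I) ≤
      (MulAction.stabilizer (Equiv.Perm (Fin (m + 1))) t).comap (permHom cs) from this hu
  rw [Subgroup.closure_le, Set.image_subset_iff]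
  intro i hi
  simpa using adjSwap_of_ne (ht i hi).1 (ht i hi).2

lemma mapsTo_permHom_Icc {I : Set (Fin m)} {a b : Fin (m + 1)}
    (hI : ∀ i ∈ I, a ≤ i.castSucc ∧ i.succ ≤ b) {u : W}
    (hu : u ∈ Subgroup.closure (cs.simple '' I)) :
    Set.MapsTo (permHom cs u) (Set.Icc a b) (Set.Icc a b) := by
  intro t ht
  by_contra hut
  refine hut ((permHom cs u).injective (permHom_apply_of_mem_closure hu fun i hi ↦ ?_) ▸ ht)
  have hIi := hI i hi
  simp only [Set.mem_Icc, Fin.le_def, Fin.val_castSucc, Fin.val_succ] at hIi hut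
  omega

lemma IsLongestElementOf.coe_permHom_apply_add {I : Set (Fin m)} {a b t : Fin (m + 1)}
    (hI : ∀ i, i ∈ I ↔ a ≤ i.castSucc ∧ i.succ ≤ b) {u : W} (hu : IsLongestElementOf cs I u)
    (ht : t ∈ Set.Icc a b) : (permHom cs u t : ℕ) + t = a + b :=
  coe_apply_add_eq_of_not_isAscent (mapsTo_permHom_Icc (fun i ↦ (hI i).1) hu.1)
    (fun i ha hb ↦ isRightDescent_iff_not_isAscent_permHom.1
      (hu.isRightDescent ((hI i).2 ⟨ha, hb⟩))) ht

lemma IsLongestElementOf.conj_simple {I : Set (Fin m)} {a b : Fin (m + 1)}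
    (hI : ∀ i, i ∈ I ↔ a ≤ i.castSucc ∧ i.succ ≤ b) {u : W} (hu : IsLongestElementOf cs I u)
    {i j : Fin m} (hi : i ∈ I) (hij : (i : ℕ) + j + 1 = a + b) :
    u * cs.simple i * u⁻¹ = cs.simple j := by
  obtain ⟨ha, hb⟩ := (hI i).1 hi
  have hlt := (Fin.castSucc_lt_succ (i := i)).le
  have hleft := hu.coe_permHom_apply_add hI ⟨ha, hlt.trans hb⟩
  have hright := hu.coe_permHom_apply_add hI ⟨ha.trans hlt, hb⟩
  rw [Fin.val_castSucc] at hleft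
  rw [Fin.val_succ] at hright
  have hleft' : permHom cs u i.castSucc = j.succ := Fin.ext (by rw [Fin.val_succ]; omega)
  have hright' : permHom cs u i.succ = j.castSucc := Fin.ext (by rw [Fin.val_castSucc]; omega)
  apply permHom_injective cs
  rw [map_mul, map_mul, map_inv, permHom_simple, permHom_simple, adjSwap,
    ← Equiv.swap_apply_apply, hleft', hright', Equiv.swap_comm, adjSwap]

/-! ### Direct products and connected subsets in type `A` -/

lemma isDirectProd_of_far {J K : Set (Fin m)}
    (h : ∀ i ∈ J, ∀ j ∈ K, (i : ℕ) + 1 < j ∨ (j : ℕ) + 1 < i) : IsDirectProd cs J K := by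
  refine ⟨eq_bot_iff.2 fun u ⟨hJ, hK⟩ ↦ ?_, fun x hx y hy ↦ ?_⟩
  · refine Subgroup.mem_bot.2 (permHom_injective cs (Equiv.ext fun t ↦ ?_))
    rw [map_one, Equiv.Perm.one_apply]
    by_cases ht : ∃ i ∈ J, (t : ℕ) = i ∨ (t : ℕ) = i + 1
    · obtain ⟨i, hi, ht⟩ := ht
      refine permHom_apply_of_mem_closure hK fun j hj ↦ ?_
      have hij := h i hi j hj
      omega
    · push Not at ht
      exact permHom_apply_of_mem_closure hJ ht
  · have hle : Subgroup.closure (cs.simple '' J) ≤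
        Subgroup.centralizer (Subgroup.closure (cs.simple '' K)) := by
      rw [Subgroup.centralizer_closure, Subgroup.closure_le]
      rintro _ ⟨i, hi, rfl⟩
      rw [SetLike.mem_coe, Subgroup.mem_centralizer_iff]
      rintro _ ⟨j, hj, rfl⟩
      exact (simple_commute_of_far (h i hi j hj)).symm
    exact (Subgroup.mem_centralizer_iff.1 (hle hx) y hy).symm

lemma isDirectProd_iff_far {J K : Set (Fin m)} :
    IsDirectProd cs J K ↔ ∀ i ∈ J, ∀ j ∈ K, (i : ℕ) + 1 < j ∨ (j : ℕ) + 1 < i := by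
  refine ⟨fun ⟨hinf, hcomm⟩ i hi j hj ↦ ?_, isDirectProd_of_far⟩
  have hiJ := Subgroup.subset_closure (Set.mem_image_of_mem cs.simple hi)
  have hjK := Subgroup.subset_closure (Set.mem_image_of_mem cs.simple hj)
  have hswap : Commute (adjSwap i) (adjSwap j) := by
    simpa only [permHom_simple] using Commute.map (hcomm _ hiJ _ hjK) (permHom cs)
  obtain rfl | (h | h) | h := eq_or_adjacent_or_far i j
  · have hone : cs.simple i = 1 := Subgroup.mem_bot.1 (hinf ▸ Subgroup.mem_inf.2 ⟨hiJ, hjK⟩)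
    simpa [hone] using cs.length_simple i
  · exact absurd hswap (not_commute_adjSwap h)
  · exact absurd hswap.symm (not_commute_adjSwap h)
  · exact h

lemma ordConnected_of_isConnectedSubset {I : Set (Fin m)} (hI : IsConnectedSubset cs I) :
    I.OrdConnected := by
  refine ⟨fun i hi j hj k hk ↦ by_contra fun hkI ↦ hI.2.2 ?_⟩
  have hik : i < k := hk.1.lt_of_ne (by rintro rfl; exact hkI hi)
  have hkj : k < j := hk.2.lt_of_ne (by rintro rfl; exact hkI hj)
  refine ⟨I ∩ Set.Iio k, I ∩ Set.Ioi k, ⟨i, hi, hik⟩, ⟨j, hj, hkj⟩, ?_, ?_, ?_⟩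
  · rw [← Set.inter_union_distrib_left, Set.Iio_union_Ioi, Set.inter_eq_left]
    rintro x hx rfl
    exact hkI hx
  · rw [Set.disjoint_left]
    exact fun x hx hx' ↦ (Set.mem_Iio.1 hx.2).asymm hx'.2
  · refine isDirectProd_of_far fun x hx y hy ↦ .inl ?_
    exact (Nat.succ_le_of_lt hx.2).trans_lt hy.2

lemma lt_of_ordConnected_union {J K : Set (Fin m)} (hJK : (J ∪ K).OrdConnected)
    (h : ∀ i ∈ J, ∀ j ∈ K, (i : ℕ) + 1 < j ∨ (j : ℕ) + 1 < i) {i j : Fin m}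
    (hi : i ∈ J) (hj : j ∈ K) : j < i := by
  by_contra! hij
  obtain ⟨a, ⟨haJ, haj⟩, hmax⟩ := Set.exists_max_image (J ∩ Set.Iic j) id (Set.toFinite _)
    ⟨i, hi, hij⟩
  have haj : a ≤ j := haj
  have hfar := h a haJ j hj
  rw [Fin.le_def] at haj
  have hsucc : (⟨a + 1, by omega⟩ : Fin m) ∈ J ∪ K :=
    hJK.out (.inl haJ) (.inr hj)
      ⟨Fin.le_def.2 (Nat.le_succ _), Fin.le_def.2 (by dsimp only; omega)⟩
  obtain hJ | hK := hsucc
  · have hle := Fin.le_def.1 (hmax _ ⟨hJ, Fin.le_def.2 (by dsimp only; omega)⟩)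
    dsimp only [id] at hle
    omega
  · have hfar' := h a haJ _ hK
    dsimp only at hfar'
    omega

lemma isConnectedSubset_iff_ordConnected {I : Set (Fin m)} :
    IsConnectedSubset cs I ↔ I.Nonempty ∧ I.OrdConnected := by
  refine ⟨fun h ↦ ⟨h.1, ordConnected_of_isConnectedSubset h⟩, fun ⟨hne, hI⟩ ↦ ?_⟩
  have := finite_of_typeA cs
  refine ⟨hne, Set.toFinite _, ?_⟩
  rintro ⟨J, K, ⟨i, hi⟩, ⟨j, hj⟩, rfl, -, hJK⟩
  have hfar := isDirectProd_iff_far.1 hJK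
  exact lt_asymm (lt_of_ordConnected_union hI hfar hi hj) (lt_of_ordConnected_union
    (Set.union_comm J K ▸ hI) (fun x hx y hy ↦ (hfar y hy x hx).symm) hj hi)

end TypeA

/-! ### Intervals -/

namespace CactusIdx

section Reflect

variable {n : ℕ} {x y : CactusIdx n}

/-- The nesting order on the generators of the cactus group: `s_{m,r} ≤ s_{p,q}` means
`[m,r] ⊆ [p,q]`. -/
instance : LE (CactusIdx n) := ⟨fun y x ↦ x.1.1 ≤ y.1.1 ∧ y.1.2 ≤ x.1.2⟩

lemma disjoint_Icc_iff :
    Disjoint (Set.Icc x.1.1 x.1.2) (Set.Icc y.1.1 y.1.2) ↔ x.1.2 < y.1.1 ∨ y.1.2 < x.1.1 := by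
  have hx := x.2
  have hy := y.2
  rw [Set.disjoint_iff_inter_eq_empty, Set.Icc_inter_Icc, Set.Icc_eq_empty_iff]
  omega

/-- The image `[p+q-r, p+q-m]` of the interval `y = [m,r]` under the reversal of `x = [p,q]`. -/
def reflect (x y : CactusIdx n) (h : y ≤ x) : CactusIdx n :=
  ⟨(x.1.1 + x.1.2 - y.1.2, x.1.1 + x.1.2 - y.1.1), by
    have hx := x.2
    have hy := y.2
    obtain ⟨hp, hq⟩ := h
    dsimp only
    omega⟩

lemma reflect_le (h : y ≤ x) : x.reflect y h ≤ x := by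
  have hy := y.2
  obtain ⟨hp, hq⟩ := h
  constructor <;> dsimp only [reflect] <;> omega

lemma reflect_reflect (h : y ≤ x) : x.reflect (x.reflect y h) (reflect_le h) = y := by
  obtain ⟨hp, hq⟩ := h
  have hy := y.2
  refine Subtype.ext (Prod.ext ?_ ?_) <;> dsimp only [reflect] <;> omega

end Reflect

variable {m : ℕ} {x y : CactusIdx (m + 1)}

/-- The set of simple reflections `{s_p, …, s_{q-1}}` attached to the generator `s_{p,q}`; the
simple reflection `s_k` has index `k - 1` in `Fin m`. -/
def toSet (x : CactusIdx (m + 1)) : Set (Fin m) :=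
  {i | x.1.1 - 1 ≤ (i : ℕ) ∧ (i : ℕ) ≤ x.1.2 - 2}

lemma mem_toSet {i : Fin m} : i ∈ x.toSet ↔ x.1.1 ≤ i + 1 ∧ (i : ℕ) + 2 ≤ x.1.2 := by
  have hx := x.2
  change _ ∧ _ ↔ _
  omega

lemma toSet_subset_iff : x.toSet ⊆ y.toSet ↔ x ≤ y := by
  have hx := x.2
  refine ⟨fun h ↦ ?_, fun ⟨hp, hq⟩ i hi ↦ ?_⟩
  · have hfirst := mem_toSet.1 (@h ⟨x.1.1 - 1, by omega⟩ (mem_toSet.2 (by dsimp only; omega)))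
    have hlast := mem_toSet.1 (@h ⟨x.1.2 - 2, by omega⟩ (mem_toSet.2 (by dsimp only; omega)))
    dsimp only at hfirst hlast
    constructor <;> omega
  · rw [mem_toSet] at hi ⊢
    omega

lemma toSet_injective : Function.Injective (toSet (m := m)) := fun _ _ h ↦
  have hle := toSet_subset_iff.1 h.subset
  have hge := toSet_subset_iff.1 h.symm.subset
  Subtype.ext (Prod.ext (hge.1.antisymm hle.1) (hle.2.antisymm hge.2))

lemma toSet_nonempty (x : CactusIdx (m + 1)) : x.toSet.Nonempty := by
  have hx := x.2
  exact ⟨⟨x.1.1 - 1, by omega⟩, mem_toSet.2 (by dsimp only; omega)⟩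

lemma ordConnected_toSet (x : CactusIdx (m + 1)) : x.toSet.OrdConnected := by
  refine ⟨fun i hi j hj k hk ↦ ?_⟩
  rw [mem_toSet] at hi hj ⊢
  rw [Set.mem_Icc, Fin.le_def, Fin.le_def] at hk
  omega

lemma exists_toSet_eq {I : Set (Fin m)} (hne : I.Nonempty) (hI : I.OrdConnected) :
    ∃ x : CactusIdx (m + 1), x.toSet = I := by
  obtain ⟨a, ha, hmin⟩ := Set.exists_min_image I id I.toFinite hne
  obtain ⟨b, hb, hmax⟩ := Set.exists_max_image I id I.toFinite hne
  have hab := Fin.le_def.1 (hmin b hb)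
  dsimp only [id] at hab
  let x : CactusIdx (m + 1) := ⟨(a + 1, b + 2), by dsimp only; omega⟩
  refine ⟨x, Set.ext fun i ↦ ?_⟩
  rw [mem_toSet]
  dsimp only [x]
  refine ⟨fun h ↦ hI.out ha hb ⟨Fin.le_def.2 (by omega), Fin.le_def.2 (by omega)⟩, fun hi ↦ ?_⟩
  have hai := Fin.le_def.1 (hmin i hi)
  have hib := Fin.le_def.1 (hmax i hi)
  dsimp only [id] at hai hib
  omega

lemma exists_mem_toSet_reflect (h : y ≤ x) {i : Fin m} (hi : i ∈ y.toSet) :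
    ∃ j ∈ (x.reflect y h).toSet, (i : ℕ) + j + 3 = x.1.1 + x.1.2 := by
  have hx := x.2
  have hy := y.2
  have hp := h.1
  have hq := h.2
  rw [mem_toSet] at hi
  refine ⟨⟨x.1.1 + x.1.2 - 3 - i, by omega⟩, mem_toSet.2 ?_, ?_⟩ <;> dsimp only [reflect] <;>
    omega

variable {cs : CoxeterSystem (CoxeterMatrix.A m) W}

variable (cs) in
lemma isConnectedSubset_toSet (x : CactusIdx (m + 1)) : IsConnectedSubset cs x.toSet :=
  isConnectedSubset_iff_ordConnected.2 ⟨x.toSet_nonempty, x.ordConnected_toSet⟩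

variable (cs) in
/-- The bijection between the generators of the cactus group and those of the generalized cactus
group of type `A`. -/
noncomputable def equivConnIdx : CactusIdx (m + 1) ≃ ConnIdx cs :=
  Equiv.ofBijective (fun x ↦ ⟨x.toSet, x.isConnectedSubset_toSet cs⟩)
    ⟨fun _ _ h ↦ toSet_injective (congrArg Subtype.val h), fun ⟨_, hI⟩ ↦
      (exists_toSet_eq hI.1 (ordConnected_of_isConnectedSubset hI)).imp fun _ ↦ Subtype.ext⟩

@[simp]
lemma coe_equivConnIdx (x : CactusIdx (m + 1)) : (equivConnIdx cs x).1 = x.toSet := rfl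

lemma isDirectProd_toSet_iff :
    IsDirectProd cs x.toSet y.toSet ↔ Disjoint (Set.Icc x.1.1 x.1.2) (Set.Icc y.1.1 y.1.2) := by
  have hx := x.2
  have hy := y.2
  rw [isDirectProd_iff_far, disjoint_Icc_iff]
  refine ⟨fun h ↦ ?_, fun h i hi j hj ↦ ?_⟩
  · by_contra hmeet
    have hfar := h ⟨max x.1.1 (y.1.1 - 1) - 1, by omega⟩ (mem_toSet.2 (by dsimp only; omega))
      ⟨max y.1.1 (x.1.1 - 1) - 1, by omega⟩ (mem_toSet.2 (by dsimp only; omega))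
    dsimp only at hfar
    omega
  · rw [mem_toSet] at hi hj
    omega

end CactusIdx

section ConjSimple

/-- The set of simple reflections in `u I u⁻¹`, which for `u = w_J` indexes the third generator in
the relators of the generalized cactus group. -/
def conjSimple (cs : CoxeterSystem M W) (u : W) (I : Set B) : Set B :=
  {b | ∃ i ∈ I, u * cs.simple i * u⁻¹ = cs.simple b}

lemma conjSimple_eq_of_forall_exists {cs : CoxeterSystem M W} {u : W} {I J : Set B}
    (hinj : Function.Injective cs.simple)
    (hIJ : ∀ i ∈ I, ∃ j ∈ J, u * cs.simple i * u⁻¹ = cs.simple j)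
    (hJI : ∀ j ∈ J, ∃ i ∈ I, u * cs.simple i * u⁻¹ = cs.simple j) : conjSimple cs u I = J := by
  refine Set.Subset.antisymm ?_ hJI
  rintro b ⟨i, hi, hib⟩
  obtain ⟨j, hj, hij⟩ := hIJ i hi
  exact hinj (hib.symm.trans hij) ▸ hj

lemma IsDirectProd.conjSimple_eq {cs : CoxeterSystem M W} {u : W} {I J : Set B}
    (h : IsDirectProd cs I J) (hinj : Function.Injective cs.simple)
    (hu : u ∈ Subgroup.closure (cs.simple '' J)) : conjSimple cs u I = I := by
  have hconj : ∀ i ∈ I, u * cs.simple i * u⁻¹ = cs.simple i := fun i hi ↦ by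
    rw [← h.2 _ (Subgroup.subset_closure ⟨i, hi, rfl⟩) _ hu, mul_inv_cancel_right]
  exact conjSimple_eq_of_forall_exists hinj (fun i hi ↦ ⟨i, hi, hconj i hi⟩)
    fun i hi ↦ ⟨i, hi, hconj i hi⟩

variable {m : ℕ} {cs : CoxeterSystem (CoxeterMatrix.A m) W} {u : W} {x y : CactusIdx (m + 1)}

lemma IsLongestElementOf.conj_simple_of_mem_toSet (hu : IsLongestElementOf cs x.toSet u)
    {i j : Fin m} (hi : i ∈ x.toSet) (hij : (i : ℕ) + j + 3 = x.1.1 + x.1.2) :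
    u * cs.simple i * u⁻¹ = cs.simple j := by
  have hx := x.2
  refine hu.conj_simple (a := ⟨x.1.1 - 1, by omega⟩) (b := ⟨x.1.2 - 1, by omega⟩) (fun k ↦ ?_) hi
    (by dsimp only; omega)
  rw [CactusIdx.mem_toSet, Fin.le_def, Fin.le_def, Fin.val_castSucc, Fin.val_succ]
  dsimp only
  omega

lemma IsLongestElementOf.conjSimple_toSet (hu : IsLongestElementOf cs x.toSet u) (h : y ≤ x) :
    conjSimple cs u y.toSet = (x.reflect y h).toSet := by
  have hconj {z : CactusIdx (m + 1)} (hz : z ≤ x) {i j : Fin m} (hi : i ∈ z.toSet)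
      (hij : (i : ℕ) + j + 3 = x.1.1 + x.1.2) : u * cs.simple i * u⁻¹ = cs.simple j :=
    hu.conj_simple_of_mem_toSet (CactusIdx.toSet_subset_iff.2 hz hi) hij
  refine conjSimple_eq_of_forall_exists (simple_injective_of_typeA cs) (fun i hi ↦ ?_)
    fun j hj ↦ ?_
  · obtain ⟨j, hj, hij⟩ := CactusIdx.exists_mem_toSet_reflect h hi
    exact ⟨j, hj, hconj h hi hij⟩
  · obtain ⟨i, hi, hij⟩ := CactusIdx.exists_mem_toSet_reflect (CactusIdx.reflect_le h) hj
    rw [CactusIdx.reflect_reflect] at hi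
    exact ⟨i, hi, hconj h hi (by omega)⟩

end ConjSimple

/-! ### The two presentations -/

section Presentations

variable {G : Type*} [Group G]

lemma semiconjBy_iff_conj_mul_inv_eq_one {a b c : G} :
    SemiconjBy a b c ↔ a * b * a⁻¹ * c⁻¹ = 1 := by
  rw [mul_inv_eq_one, mul_inv_eq_iff_eq_mul, SemiconjBy]

lemma semiconjBy_iff_mul_conj_inv_eq_one {a b c : G} :
    SemiconjBy a b c ↔ c * a * b⁻¹ * a⁻¹ = 1 := by
  rw [mul_inv_eq_one, mul_inv_eq_iff_eq_mul, eq_comm, SemiconjBy]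

namespace CactusGroup

variable {n : ℕ} {x y : CactusIdx n}

/-- The generator `s_{p,q}` of the cactus group. -/
def gen (x : CactusIdx n) : CactusGroup n := PresentedGroup.of x

lemma gen_mul_self (x : CactusIdx n) : gen x * gen x = 1 :=
  PresentedGroup.one_of_mem (x := .of x * .of x) (.inl ⟨x, rfl⟩)

lemma commute_gen (h : Disjoint (Set.Icc x.1.1 x.1.2) (Set.Icc y.1.1 y.1.2)) :
    Commute (gen x) (gen y) :=
  semiconjBy_iff_conj_mul_inv_eq_one.2 <|
    PresentedGroup.one_of_mem (rels := cactusRels n) (.inr (.inl ⟨x, y, h, rfl⟩))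

lemma semiconjBy_gen (h : y ≤ x) : SemiconjBy (gen x) (gen y) (gen (x.reflect y h)) :=
  semiconjBy_iff_conj_mul_inv_eq_one.2 <| PresentedGroup.one_of_mem (rels := cactusRels n)
    (.inr (.inr ⟨x, y, _, h.1, h.2, rfl, rfl, rfl⟩))

/-- The universal property of the cactus group, with the relations read in the target group. -/
def lift (f : CactusIdx n → G) (hsq : ∀ x, f x * f x = 1)
    (hcomm : ∀ x y : CactusIdx n, Disjoint (Set.Icc x.1.1 x.1.2) (Set.Icc y.1.1 y.1.2) →
      Commute (f x) (f y))
    (hnest : ∀ x y (h : y ≤ x), SemiconjBy (f x) (f y) (f (x.reflect y h))) :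
    CactusGroup n →* G :=
  PresentedGroup.toGroup (f := f) <| by
    rintro r (⟨x, rfl⟩ | ⟨x, y, h, rfl⟩ | ⟨x, y, z, hp, hq, hz, hz', rfl⟩) <;>
      simp only [map_mul, map_inv, FreeGroup.lift_apply_of]
    · exact hsq x
    · exact semiconjBy_iff_conj_mul_inv_eq_one.1 (hcomm x y h)
    · obtain rfl : z = x.reflect y ⟨hp, hq⟩ := Subtype.ext (Prod.ext hz hz')
      exact semiconjBy_iff_conj_mul_inv_eq_one.1 (hnest x y ⟨hp, hq⟩)

@[simp]
lemma lift_gen (f : CactusIdx n → G) (hsq hcomm hnest) (x : CactusIdx n) :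
    lift f hsq hcomm hnest (gen x) = f x :=
  PresentedGroup.toGroup.of _

lemma hom_ext {φ ψ : CactusGroup n →* G} (h : ∀ x, φ (gen x) = ψ (gen x)) : φ = ψ :=
  PresentedGroup.ext h

end CactusGroup

namespace GenCactusGroup

variable {cs : CoxeterSystem M W} {w : Set B → W} {X Y Z : ConnIdx cs}

variable (w) in
/-- The generator `γ_I` of the generalized cactus group. -/
def gen (X : ConnIdx cs) : GenCactusGroup cs w := PresentedGroup.of X

variable (w) in
lemma gen_mul_self (X : ConnIdx cs) : gen w X * gen w X = 1 :=
  PresentedGroup.one_of_mem (x := .of X * .of X) (.inl ⟨X, rfl⟩)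

lemma semiconjBy_gen (h : X.1 ⊆ Y.1 ∨ IsDirectProd cs X.1 Y.1)
    (hZ : Z.1 = conjSimple cs (w Y.1) X.1) : SemiconjBy (gen w Y) (gen w Z) (gen w X) :=
  semiconjBy_iff_mul_conj_inv_eq_one.2 <|
    PresentedGroup.one_of_mem (rels := gcactusRels cs w) (.inr ⟨X, Y, Z, h, hZ, rfl⟩)

/-- The universal property of the generalized cactus group, with the relations read in the target
group. -/
def lift (f : ConnIdx cs → G) (hsq : ∀ X, f X * f X = 1)
    (hconj : ∀ X Y Z : ConnIdx cs, X.1 ⊆ Y.1 ∨ IsDirectProd cs X.1 Y.1 →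
      Z.1 = conjSimple cs (w Y.1) X.1 → SemiconjBy (f Y) (f Z) (f X)) :
    GenCactusGroup cs w →* G :=
  PresentedGroup.toGroup (f := f) <| by
    rintro r (⟨X, rfl⟩ | ⟨X, Y, Z, h, hZ, rfl⟩) <;>
      simp only [map_mul, map_inv, FreeGroup.lift_apply_of]
    · exact hsq X
    · exact semiconjBy_iff_mul_conj_inv_eq_one.1 (hconj X Y Z h hZ)

@[simp]
lemma lift_gen (f : ConnIdx cs → G) (hsq) (hconj) (X : ConnIdx cs) :
    lift (w := w) f hsq hconj (gen w X) = f X :=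
  PresentedGroup.toGroup.of _

lemma hom_ext {φ ψ : GenCactusGroup cs w →* G} (h : ∀ X, φ (gen w X) = ψ (gen w X)) : φ = ψ :=
  PresentedGroup.ext h

end GenCactusGroup

end Presentations

/-! ### The isomorphism -/

section Isomorphism

open CactusIdx

variable {m : ℕ} {cs : CoxeterSystem (CoxeterMatrix.A m) W} {w : Set (Fin m) → W}
  {x y z : CactusIdx (m + 1)}

lemma commute_gen_equivConnIdx (hy : IsLongestElementOf cs y.toSet (w y.toSet))
    (h : Disjoint (Set.Icc x.1.1 x.1.2) (Set.Icc y.1.1 y.1.2)) :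
    Commute (GenCactusGroup.gen w (equivConnIdx cs x))
      (GenCactusGroup.gen w (equivConnIdx cs y)) := by
  have hprod := (isDirectProd_toSet_iff (cs := cs)).2 h
  exact Commute.symm <| GenCactusGroup.semiconjBy_gen (.inr hprod)
    (hprod.conjSimple_eq (simple_injective_of_typeA cs) hy.1).symm

lemma semiconjBy_gen_equivConnIdx (hx : IsLongestElementOf cs x.toSet (w x.toSet))
    (h : y ≤ x) :
    SemiconjBy (GenCactusGroup.gen w (equivConnIdx cs x)) (GenCactusGroup.gen w (equivConnIdx cs y))
      (GenCactusGroup.gen w (equivConnIdx cs (x.reflect y h))) := by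
  refine GenCactusGroup.semiconjBy_gen (.inl (toSet_subset_iff.2 (reflect_le h))) ?_
  rw [coe_equivConnIdx, coe_equivConnIdx, coe_equivConnIdx, hx.conjSimple_toSet (reflect_le h),
    reflect_reflect]

lemma semiconjBy_gen_of_toSet_eq_conjSimple (hy : IsLongestElementOf cs y.toSet (w y.toSet))
    (h : x.toSet ⊆ y.toSet ∨ IsDirectProd cs x.toSet y.toSet)
    (hz : z.toSet = conjSimple cs (w y.toSet) x.toSet) :
    SemiconjBy (CactusGroup.gen y) (CactusGroup.gen z) (CactusGroup.gen x) := by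
  obtain hsub | hprod := h
  · have hle := toSet_subset_iff.1 hsub
    rw [hy.conjSimple_toSet hle] at hz
    have hconj := CactusGroup.semiconjBy_gen (reflect_le hle)
    rwa [reflect_reflect, ← toSet_injective hz] at hconj
  · rw [hprod.conjSimple_eq (simple_injective_of_typeA cs) hy.1] at hz
    rw [toSet_injective hz]
    exact (CactusGroup.commute_gen (isDirectProd_toSet_iff.1 hprod)).symm

/-- The isomorphism `s_{p,q} ↦ γ_{{s_p, …, s_{q-1}}}` from the cactus group to the generalized
cactus group of type `A`. -/
noncomputable def cactusMulEquiv
    (hw : ∀ I : Set (Fin m), IsConnectedSubset cs I → IsLongestElementOf cs I (w I)) :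
    CactusGroup (m + 1) ≃* GenCactusGroup cs w :=
  have hlongest (x : CactusIdx (m + 1)) := hw _ (x.isConnectedSubset_toSet cs)
  MonoidHom.toMulEquiv
    (CactusGroup.lift (fun x ↦ GenCactusGroup.gen w (equivConnIdx cs x))
      (fun _ ↦ GenCactusGroup.gen_mul_self w _)
      (fun _ y ↦ commute_gen_equivConnIdx (hlongest y))
      (fun x _ ↦ semiconjBy_gen_equivConnIdx (hlongest x)))
    (GenCactusGroup.lift (fun X ↦ CactusGroup.gen ((equivConnIdx cs).symm X))
      (fun _ ↦ CactusGroup.gen_mul_self _) <| by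
        simpa only [(equivConnIdx cs).surjective.forall, Equiv.symm_apply_apply,
          coe_equivConnIdx] using
          fun x y z ↦ semiconjBy_gen_of_toSet_eq_conjSimple (hlongest y))
    (CactusGroup.hom_ext fun x ↦ by simp)
    (GenCactusGroup.hom_ext fun X ↦ by simp)

lemma cactusMulEquiv_gen
    (hw : ∀ I : Set (Fin m), IsConnectedSubset cs I → IsLongestElementOf cs I (w I))
    (x : CactusIdx (m + 1)) :
    cactusMulEquiv hw (CactusGroup.gen x) = GenCactusGroup.gen w (equivConnIdx cs x) := by
  simp [cactusMulEquiv]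

end Isomorphism

/-- for `W` of type `A_{n-1}`, the generalized cactus group `C_W` is
isomorphic to the cactus group `J_n` via `s_{p,q} ↦ γ_{{s_p, …, s_{q-1}}}`. -/
theorem gen_cactus_typeA_iso_cactus {W : Type*} [Group W] (n : ℕ) (hn : 2 ≤ n)
    (cs : CoxeterSystem (CoxeterMatrix.Aₙ (n - 1)) W) (w : Set (Fin (n - 1)) → W)
    (hw : ∀ I : Set (Fin (n - 1)), IsConnectedSubset cs I →
      IsLongestElementOf cs I (w I)) :
    ∃ φ : CactusGroup n ≃* GenCactusGroup cs w,
      ∀ (x : CactusIdx n)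
        (h : IsConnectedSubset cs
          {i : Fin (n - 1) | x.1.1 - 1 ≤ (i : ℕ) ∧ (i : ℕ) ≤ x.1.2 - 2}),
        φ (PresentedGroup.of x) = PresentedGroup.of
          (⟨{i : Fin (n - 1) | x.1.1 - 1 ≤ (i : ℕ) ∧ (i : ℕ) ≤ x.1.2 - 2}, h⟩ :
            ConnIdx cs) := by
  obtain ⟨m, rfl⟩ : ∃ m, n = m + 1 := ⟨n - 1, by omega⟩
  exact ⟨cactusMulEquiv (cs := cs) hw, fun x _ ↦ cactusMulEquiv_gen (cs := cs) hw x⟩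
end

section
/- Let (W,S) be a right-angled Coxeter system, G a group of automorphisms of (W,S), I ⊆ S, and {g_i}_{i∈I} a family of involutions in G satisfying: (1) g_i(s) ∈ S for all i ∈ I, s ∈ S; (2) for i,j ∈ I with ij = ji, either g_i(j) ∈ I, g_j(i) = i, and g_{g_i(j)} = g_i g_j g_i, or symmetrically with i and j exchanged; (3) g_i(i) = i for all i ∈ I. Let H ≤ W ⋊ G be generated by {i·g_i}_{i∈I}, and let L be the abstract group generated by {l_i}_{i∈I} with relations l_i² = 1 and l_i l_j = l_{g_i(j)} l_i whenever ij = ji, g_j(i) = i, g_i(j) ∈ I, and g_{g_i(j)} = g_i g_j g_i. Then the map l_i ↦ i·g_i is a group isomorphism L → H. -/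
/-!
Moving all automorphisms to the right, the `W`-component of a product of elements `i · g_i` is
represented by a word whose letters are the indices `i`, twisted by the preceding automorphisms.
By Tits' solution of the word problem, a nonempty word representing `1` in a right-angled Coxeter
group has two equal letters that become adjacent, and cancel, after exchanging commuting
neighbours. For twisted words each such exchange is realised by a relation of `L`: by condition (2),
if the letters of `l_x l_y` commute, then `l_x l_y = l_k l_z` for some `k` and `z`, and the letters
of `l_k l_z` are those of `l_x l_y` in the opposite order. Hence a product of generators of `L` with
trivial image can be shortened in `L` until it is empty.

Tits' criterion is proved with the contragredient representation: applied to a point of the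
fundamental chamber, a reduced word makes only the coordinates of its front letters negative.
-/

open CoxeterSystem SemidirectProduct

variable {B W : Type*} [Group W] {M : CoxeterMatrix B}

/-- The relators of the group `L`: `l_i² = 1`, and `l_i l_j = l_{g_i(j)} l_i` whenever
`ij = ji`, `g_j(i) = i`, `g_i(j) ∈ I`, and `g_{g_i(j)} = g_i g_j g_i`.  Here the action
of `g_i` on the index set is recorded by `gB`. -/
def Lrels (cs : CoxeterSystem M W) (I : Set B) (g_ : B → MulAut W) (gB : B → B → B) :
    Set (FreeGroup {i : B // i ∈ I}) :=
  {r | (∃ x : {i : B // i ∈ I}, r = .of x * .of x) ∨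
    ∃ x y z : {i : B // i ∈ I},
      cs.simple x.1 * cs.simple y.1 = cs.simple y.1 * cs.simple x.1 ∧
      gB y.1 x.1 = x.1 ∧ gB x.1 y.1 ∈ I ∧ z.1 = gB x.1 y.1 ∧
      g_ (gB x.1 y.1) = g_ x.1 * g_ y.1 * g_ x.1 ∧
      r = .of x * .of y * (.of z * .of x)⁻¹}

/-- The subgroup `H` of `W ⋊ Aut(W)` generated by the elements `i · g_i` for `i ∈ I`. -/
def Hsub (cs : CoxeterSystem M W) (I : Set B) (g_ : B → MulAut W) :
    Subgroup (W ⋊[MonoidHom.id (MulAut W)] MulAut W) :=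
  Subgroup.closure {x | ∃ i ∈ I, x = inl (cs.simple i) * inr (g_ i)}

section Words

variable {B' : Type*} {r : B → B → Prop} {r' : B' → B' → Prop}

/-- A letter `b` is a front letter of a word if some occurrence of `b` in it can be moved to the
front by exchanging neighbouring `r`-related letters. -/
def IsFrontLetter (r : B → B → Prop) (b : B) : List B → Prop
  | [] => False
  | c :: v => b = c ∨ r c b ∧ IsFrontLetter r b v

/-- A word is commutation-reduced if no two equal letters of it can be made adjacent by exchanging
neighbouring `r`-related letters. For `r` the commutation of simple reflections this is Tits'
criterion for a reduced word in a right-angled Coxeter group. -/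
def IsCommReduced (r : B → B → Prop) : List B → Prop
  | [] => True
  | b :: v => ¬ IsFrontLetter r b v ∧ IsCommReduced r v

theorem isFrontLetter_map (e : r ↪r r') {b : B} {v : List B} :
    IsFrontLetter r' (e b) (v.map e) ↔ IsFrontLetter r b v := by
  induction v with
  | nil => rfl
  | cons c v ih => simp only [List.map_cons, IsFrontLetter, e.inj, e.map_rel_iff, ih]

theorem isCommReduced_map (e : r ↪r r') {v : List B} :
    IsCommReduced r' (v.map e) ↔ IsCommReduced r v := by
  induction v with
  | nil => rfl
  | cons b v ih => simp only [List.map_cons, IsCommReduced, isFrontLetter_map, ih]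

end Words

section TwistedWords

variable {ι L : Type*} [Group L] {r : B → B → Prop} {e : ι → B} {γ : ι → r ↪r r} {l : ι → L}

/-- The word of the `W`-component of a product of elements `e x · γ x` of a semidirect product:
moving all the `γ x` to the right applies `γ x` to every letter after `e x`. -/
def twistedWord (e : ι → B) (γ : ι → r ↪r r) : List ι → List B
  | [] => []
  | x :: xs => e x :: (twistedWord e γ xs).map (γ x)

theorem exists_prod_eq_mul_prod_of_isFrontLetter (he : Function.Injective e)
    (hsq : ∀ x, l x * l x = 1)
    (hexchange : ∀ x y, r (e y) (e x) → ∃ k z, γ y (e z) = e x ∧ l x * l y = l k * l z)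
    {x : ι} {ys : List ι} (h : IsFrontLetter r (e x) (twistedWord e γ ys)) :
    ∃ zs : List ι, zs.length < ys.length ∧ (zs.map l).prod = l x * (ys.map l).prod := by
  induction ys generalizing x with
  | nil => exact h.elim
  | cons y ys ih =>
    rcases h with hxy | ⟨hyx, hfront⟩
    · obtain rfl := he hxy
      exact ⟨ys, ys.length.lt_succ_self, by
        rw [List.map_cons, List.prod_cons, ← mul_assoc, hsq, one_mul]⟩
    · obtain ⟨k, z, hz, hl⟩ := hexchange x y hyx
      -- The letters after `y` are twisted by `γ y`, which turns `e z` into `e x`.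
      rw [← hz, isFrontLetter_map] at hfront
      obtain ⟨zs, hlen, hprod⟩ := ih hfront
      refine ⟨k :: zs, Nat.succ_lt_succ hlen, ?_⟩
      simp only [List.map_cons, List.prod_cons, hprod, ← mul_assoc, hl]

theorem exists_shorter_prod_eq_of_not_isCommReduced (he : Function.Injective e)
    (hfix : ∀ x, γ x (e x) = e x) (hsq : ∀ x, l x * l x = 1)
    (hexchange : ∀ x y, r (e y) (e x) → ∃ k z, γ y (e z) = e x ∧ l x * l y = l k * l z)
    {ys : List ι} (h : ¬ IsCommReduced r (twistedWord e γ ys)) :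
    ∃ zs : List ι, zs.length < ys.length ∧ (zs.map l).prod = (ys.map l).prod := by
  induction ys with
  | nil => exact (h trivial).elim
  | cons x ys ih =>
    rw [twistedWord, IsCommReduced, isCommReduced_map, not_and_or, not_not] at h
    rcases h with hfront | hred
    · rw [← hfix x, isFrontLetter_map] at hfront
      obtain ⟨zs, hlen, hprod⟩ :=
        exists_prod_eq_mul_prod_of_isFrontLetter he hsq hexchange hfront
      exact ⟨zs, hlen.trans (Nat.lt_succ_self _), by rw [hprod, List.map_cons, List.prod_cons]⟩
    · obtain ⟨zs, hlen, hprod⟩ := ih hred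
      exact ⟨x :: zs, Nat.succ_lt_succ hlen, by simp only [List.map_cons, List.prod_cons, hprod]⟩

theorem exists_isCommReduced_twistedWord (he : Function.Injective e)
    (hfix : ∀ x, γ x (e x) = e x) (hsq : ∀ x, l x * l x = 1)
    (hexchange : ∀ x y, r (e y) (e x) → ∃ k z, γ y (e z) = e x ∧ l x * l y = l k * l z)
    (ys : List ι) :
    ∃ zs : List ι, (zs.map l).prod = (ys.map l).prod ∧ IsCommReduced r (twistedWord e γ zs) := by
  induction hn : ys.length using Nat.strong_induction_on generalizing ys with
  | h n ih =>
    subst hn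
    by_cases hred : IsCommReduced r (twistedWord e γ ys)
    · exact ⟨ys, rfl, hred⟩
    · obtain ⟨zs, hlen, hprod⟩ :=
        exists_shorter_prod_eq_of_not_isCommReduced he hfix hsq hexchange hred
      rw [← hprod]
      exact ih _ hlen zs rfl

end TwistedWords

theorem exists_list_map_prod_eq {ι L : Type*} [Group L] {l : ι → L} (hsq : ∀ x, l x * l x = 1)
    {a : L} (ha : a ∈ Subgroup.closure (Set.range l)) : ∃ ys : List ι, (ys.map l).prod = a := by
  have cons_mem (x : ι) {b : L} (hb : ∃ ys : List ι, (ys.map l).prod = b) :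
      ∃ ys : List ι, (ys.map l).prod = l x * b := by
    obtain ⟨ys, rfl⟩ := hb
    exact ⟨x :: ys, List.prod_cons⟩
  induction ha using Subgroup.closure_induction_left with
  | one => exact ⟨[], rfl⟩
  | mul_left _ hx _ _ ih =>
    obtain ⟨x, rfl⟩ := hx
    exact cons_mem x ih
  | inv_mul_cancel _ hx _ _ ih =>
    obtain ⟨x, rfl⟩ := hx
    rw [inv_eq_of_mul_eq_one_left (hsq x)]
    exact cons_mem x ih

section SimpleReflections

open Module

theorem commute_preReflection {R V : Type*} [CommRing R] [AddCommGroup V] [Module R V]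
    {x y : V} {f g : Dual R V} (hfy : f y = 0) (hgx : g x = 0) :
    Commute (preReflection x f) (preReflection y g) := by
  ext z
  simp only [End.mul_apply, preReflection_apply, map_sub, map_smul, hfy, hgx, zero_smul, sub_zero]
  abel

variable {r : B → B → Prop} {b c : B}

open Classical in
/-- The root of the letter `b` in the contragredient representation on `B → ℤ` of the right-angled
Coxeter group with commutation relation `r`. The coordinates are the values of the simple coroots,
so this is a row of a Cartan matrix, with `-2` at the pairs of infinite order. -/
noncomputable def simpleRoot (r : B → B → Prop) (b c : B) : ℤ :=
  if c = b then 2 else if r b c then 0 else -2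

/-- The action of the letter `b` in the contragredient representation. -/
noncomputable def simpleReflection (r : B → B → Prop) (b : B) : End ℤ (B → ℤ) :=
  preReflection (simpleRoot r b) (LinearMap.proj b)

theorem simpleReflection_apply (f : B → ℤ) :
    simpleReflection r b f c = f c - f b * simpleRoot r b c := by
  simp [simpleReflection, preReflection_apply]

theorem simpleReflection_apply_self (f : B → ℤ) : simpleReflection r b f b = -f b := by
  rw [simpleReflection_apply, simpleRoot, if_pos rfl]
  ring

theorem simpleReflection_apply_of_rel (hne : c ≠ b) (h : r b c) (f : B → ℤ) :
    simpleReflection r b f c = f c := by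
  simp [simpleReflection_apply, simpleRoot, hne, h]

theorem simpleReflection_apply_of_not_rel (hne : c ≠ b) (h : ¬ r b c) (f : B → ℤ) :
    simpleReflection r b f c = f c + 2 * f b := by
  rw [simpleReflection_apply, simpleRoot, if_neg hne, if_neg h]
  ring

theorem le_simpleReflection_apply (hne : c ≠ b) {f : B → ℤ} (hf : 0 ≤ f b) :
    f c ≤ simpleReflection r b f c := by
  by_cases h : r b c
  · rw [simpleReflection_apply_of_rel hne h]
  · rw [simpleReflection_apply_of_not_rel hne h]
    linarith

theorem simpleReflection_mul_self (b : B) : simpleReflection r b * simpleReflection r b = 1 :=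
  LinearMap.ext <| involutive_preReflection <| by simp [simpleRoot]

theorem commute_simpleReflection [Std.Symm r] (h : r b c) :
    Commute (simpleReflection r b) (simpleReflection r c) := by
  obtain rfl | hne := eq_or_ne b c
  · exact Commute.refl _
  · exact commute_preReflection (by simp [simpleRoot, hne, symm_of r h])
      (by simp [simpleRoot, hne.symm, h])

/-- The coordinates of the image of a point of the fundamental chamber under a reduced word can only
be negative at front letters; the bound on sums over non-commuting pairs makes this inductive. -/
theorem IsCommReduced.apply_one_pos [Std.Symm r] {v : List B} (hv : IsCommReduced r v) :
    (∀ b, ¬ IsFrontLetter r b v → 0 < (v.map (simpleReflection r)).prod 1 b) ∧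
    ∀ b c, b ≠ c → ¬ r b c → 0 < (v.map (simpleReflection r)).prod 1 b +
      (v.map (simpleReflection r)).prod 1 c := by
  induction v with
  | nil => exact ⟨fun _ _ => one_pos, fun _ _ _ _ => two_pos⟩
  | cons d v ih =>
    obtain ⟨hpos, hsum⟩ := ih hv.2
    simp only [List.map_cons, List.prod_cons, End.mul_apply]
    generalize (v.map (simpleReflection r)).prod 1 = f at hpos hsum ⊢
    have hd : 0 < f d := hpos d hv.1
    refine ⟨fun b hb => ?_, fun b c hbc hr => ?_⟩
    · have hbd : b ≠ d := fun h => hb (.inl h)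
      by_cases h : r d b
      · rw [simpleReflection_apply_of_rel hbd h]
        exact hpos b fun hfront => hb (.inr ⟨h, hfront⟩)
      · rw [simpleReflection_apply_of_not_rel hbd h]
        linarith [hsum d b hbd.symm h]
    · have hfbc := hsum b c hbc hr
      obtain rfl | hbd := eq_or_ne b d
      · rw [simpleReflection_apply_self, simpleReflection_apply_of_not_rel hbc.symm hr]
        linarith
      obtain rfl | hcd := eq_or_ne c d
      · rw [simpleReflection_apply_self,
          simpleReflection_apply_of_not_rel hbc fun h => hr (symm_of r h)]
        linarith
      · linarith [le_simpleReflection_apply (r := r) hbd hd.le,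
          le_simpleReflection_apply (r := r) hcd hd.le]

theorem IsCommReduced.eq_nil_of_prod_eq_one [Std.Symm r] {v : List B} (hv : IsCommReduced r v)
    (h : (v.map (simpleReflection r)).prod = 1) : v = [] := by
  cases v with
  | nil => rfl
  | cons b v =>
    have hpos := hv.2.apply_one_pos.1 b hv.1
    have hval : (((b :: v).map (simpleReflection r)).prod 1 : B → ℤ) b = 1 := by rw [h]; rfl
    rw [List.map_cons, List.prod_cons, End.mul_apply, simpleReflection_apply_self] at hval
    linarith

end SimpleReflections

section RightAngled

/-- A Coxeter matrix is right-angled if its off-diagonal entries are `2` or `∞`, the latter being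
encoded as `0`. -/
def IsRightAngled (M : CoxeterMatrix B) : Prop :=
  ∀ i j : B, i ≠ j → M i j = 2 ∨ M i j = 0

/-- The relation on letters that the corresponding simple reflections commute. -/
abbrev SimpleCommute (cs : CoxeterSystem M W) (b c : B) : Prop :=
  Commute (cs.simple b) (cs.simple c)

instance (cs : CoxeterSystem M W) : Std.Symm (SimpleCommute cs) := ⟨fun _ _ h => h.symm⟩

theorem simpleCommute_of_eq_two (cs : CoxeterSystem M W) {b c : B} (h : M b c = 2) :
    SimpleCommute cs b c := by
  have hsq := cs.simple_mul_simple_pow b c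
  rw [h, sq] at hsq
  simpa only [mul_inv_rev, cs.inv_simple, SimpleCommute, Commute, SemiconjBy] using
    eq_inv_of_mul_eq_one_left hsq

theorem isLiftable_simpleReflection (cs : CoxeterSystem M W) (hM : IsRightAngled M) :
    M.IsLiftable (simpleReflection (SimpleCommute cs)) := by
  intro b c
  obtain rfl | hbc := eq_or_ne b c
  · rw [simpleReflection_mul_self, one_pow]
  rcases hM b c hbc with h | h
  · rw [h, (commute_simpleReflection (simpleCommute_of_eq_two cs h)).mul_pow, sq, sq,
      simpleReflection_mul_self, simpleReflection_mul_self, one_mul]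
  · rw [h, pow_zero]

theorem IsCommReduced.eq_nil_of_wordProd_eq_one {cs : CoxeterSystem M W} (hM : IsRightAngled M)
    {v : List B} (hv : IsCommReduced (SimpleCommute cs) v) (h : cs.wordProd v = 1) : v = [] := by
  have hlift := isLiftable_simpleReflection cs hM
  have hcomp : cs.lift ⟨_, hlift⟩ ∘ cs.simple = simpleReflection (SimpleCommute cs) :=
    funext (cs.lift_apply_simple hlift)
  apply hv.eq_nil_of_prod_eq_one
  rw [← hcomp, ← List.map_map, ← map_list_prod]
  exact (congrArg _ h).trans (map_one _)

theorem simple_injective_of_isRightAngled (cs : CoxeterSystem M W) (hM : IsRightAngled M) :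
    Function.Injective cs.simple := by
  intro b c h
  by_contra hbc
  have hred : IsCommReduced (SimpleCommute cs) [b, c] := by
    simp [IsCommReduced, IsFrontLetter, hbc]
  have hprod : cs.wordProd [b, c] = 1 := by simp [CoxeterSystem.wordProd, h]
  exact List.cons_ne_nil _ _ (hred.eq_nil_of_wordProd_eq_one hM hprod)

/-- The embedding of the commutation relation into itself induced by an automorphism of `W` that
acts on the simple reflections through a map `σ` of their indices. -/
def simpleCommuteEmbedding {cs : CoxeterSystem M W} (hs : Function.Injective cs.simple)
    (g : MulAut W) (σ : B → B) (hσ : ∀ b, g (cs.simple b) = cs.simple (σ b)) :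
    SimpleCommute cs ↪r SimpleCommute cs where
  toFun := σ
  inj' b c h := hs <| g.injective <| by rw [hσ, hσ, h]
  map_rel_iff' {b c} := by
    change Commute _ _ ↔ _
    exact hσ b ▸ hσ c ▸ commute_map_iff g.injective

end RightAngled

section TwistedGenerators

/-- The element `i · g_i` of `W ⋊ Aut(W)`. -/
def twistedSimple (cs : CoxeterSystem M W) (g_ : B → MulAut W) (i : B) :
    W ⋊[MonoidHom.id (MulAut W)] MulAut W :=
  inl (cs.simple i) * inr (g_ i)

variable {cs : CoxeterSystem M W} {I : Set B} {g_ : B → MulAut W} {gB : B → B → B}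

@[simp]
theorem twistedSimple_left (i : B) : (twistedSimple cs g_ i).left = cs.simple i := by
  simp [twistedSimple]

@[simp]
theorem twistedSimple_right (i : B) : (twistedSimple cs g_ i).right = g_ i := by
  simp [twistedSimple]

theorem left_prod_twistedSimple {ι : Type*} {e : ι → B}
    {γ : ι → SimpleCommute cs ↪r SimpleCommute cs}
    (hγ : ∀ x b, g_ (e x) (cs.simple b) = cs.simple (γ x b)) (ys : List ι) :
    (ys.map fun x => twistedSimple cs g_ (e x)).prod.left = cs.wordProd (twistedWord e γ ys) := by
  induction ys with
  | nil => simp [twistedWord]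
  | cons x ys ih =>
    have map_wordProd (v : List B) : g_ (e x) (cs.wordProd v) = cs.wordProd (v.map (γ x)) := by
      simp only [CoxeterSystem.wordProd, map_list_prod, List.map_map, Function.comp_def, hγ]
    rw [List.map_cons, List.prod_cons, mul_left, ih, twistedWord, cs.wordProd_cons, ← map_wordProd,
      twistedSimple_left, twistedSimple_right, MonoidHom.id_apply]

theorem twistedSimple_mul_self {i : B} (hg : g_ i * g_ i = 1)
    (hfix : g_ i (cs.simple i) = cs.simple i) :
    twistedSimple cs g_ i * twistedSimple cs g_ i = 1 := by
  ext1 <;> simp [hg, hfix]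

theorem twistedSimple_mul_twistedSimple {i j k : B} (hcomm : SimpleCommute cs i j)
    (hg : g_ i * g_ i = 1) (hii : g_ i (cs.simple i) = cs.simple i)
    (hij : g_ i (cs.simple j) = cs.simple k) (hji : g_ j (cs.simple i) = cs.simple i)
    (hk : g_ k = g_ i * g_ j * g_ i) :
    twistedSimple cs g_ i * twistedSimple cs g_ j =
      twistedSimple cs g_ k * twistedSimple cs g_ i := by
  have hik : Commute (cs.simple i) (cs.simple k) := by
    simpa only [hii, hij] using hcomm.map (g_ i)
  ext1
  · simpa [hij, hk, hii, hji] using hik.eq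
  · simp [hk, mul_assoc, hg]

theorem lift_twistedSimple_eq_one (hinv : ∀ i ∈ I, g_ i * g_ i = 1)
    (hgB : ∀ i ∈ I, ∀ b : B, g_ i (cs.simple b) = cs.simple (gB i b))
    (hfix : ∀ i ∈ I, gB i i = i) :
    ∀ q ∈ Lrels cs I g_ gB,
      FreeGroup.lift (fun x : {i : B // i ∈ I} => twistedSimple cs g_ x) q = 1 := by
  have hfix' : ∀ i ∈ I, g_ i (cs.simple i) = cs.simple i := fun i hi => by rw [hgB i hi, hfix i hi]
  rintro q (⟨x, rfl⟩ | ⟨x, y, z, hcomm, hyx, -, hz, hg, rfl⟩)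
  · simpa only [map_mul, FreeGroup.lift_apply_of] using
      twistedSimple_mul_self (hinv x x.2) (hfix' x x.2)
  · simpa only [map_mul, map_inv, FreeGroup.lift_apply_of, mul_inv_eq_one] using
      twistedSimple_mul_twistedSimple hcomm (hinv x x.2) (hfix' x x.2)
        (by rw [hgB x x.2, hz]) (by rw [hgB y y.2, hyx]) (hz ▸ hg)

theorem generator_mul_self (x : {i : B // i ∈ I}) :
    (PresentedGroup.of x : PresentedGroup (Lrels cs I g_ gB)) * .of x = 1 :=
  PresentedGroup.one_of_mem (.inl ⟨x, rfl⟩)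

theorem generator_mul_generator_eq {x y z : {i : B // i ∈ I}} (hcomm : SimpleCommute cs x y)
    (hyx : gB y x = x) (hz : z = gB x y) (hg : g_ (gB x y) = g_ x * g_ y * g_ x) :
    (PresentedGroup.of x : PresentedGroup (Lrels cs I g_ gB)) * .of y = .of z * .of x :=
  PresentedGroup.mk_eq_mk_of_mul_inv_mem
    (.inr ⟨x, y, z, hcomm, hyx, hz ▸ z.2, hz, hg, rfl⟩)

theorem exists_generator_mul_generator_eq (hinvol : ∀ i ∈ I, Function.Involutive (gB i))
    (hcond : ∀ i ∈ I, ∀ j ∈ I, SimpleCommute cs i j →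
      (gB i j ∈ I ∧ gB j i = i ∧ g_ (gB i j) = g_ i * g_ j * g_ i) ∨
      (gB j i ∈ I ∧ gB i j = j ∧ g_ (gB j i) = g_ j * g_ i * g_ j))
    (x y : {i : B // i ∈ I}) (hcomm : SimpleCommute cs x y) :
    ∃ k z : {i : B // i ∈ I}, gB y z = x ∧
      (PresentedGroup.of x : PresentedGroup (Lrels cs I g_ gB)) * .of y = .of k * .of z := by
  rcases hcond x x.2 y y.2 hcomm with ⟨hmem, hyx, hg⟩ | ⟨hmem, hxy, hg⟩
  · exact ⟨⟨_, hmem⟩, x, hyx, generator_mul_generator_eq hcomm hyx rfl hg⟩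
  · refine ⟨y, ⟨_, hmem⟩, hinvol y y.2 x, ?_⟩
    have hrel := generator_mul_generator_eq (z := ⟨_, hmem⟩) hcomm.symm hxy rfl hg
    simpa only [mul_inv_rev, inv_eq_of_mul_eq_one_left (generator_mul_self _)] using
      congrArg (·⁻¹) hrel

theorem range_eq_Hsub {ψ : PresentedGroup (Lrels cs I g_ gB) →* _}
    (hψ : ∀ x, ψ (.of x) = twistedSimple cs g_ x) : ψ.range = Hsub cs I g_ := by
  rw [MonoidHom.range_eq_map, ← PresentedGroup.closure_range_of, MonoidHom.map_closure, Hsub,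
    ← Set.range_comp]
  congr 1
  ext a
  simp [hψ, twistedSimple, eq_comm]

theorem injective_of_apply_of_eq_twistedSimple (hM : IsRightAngled M)
    (hinv : ∀ i ∈ I, g_ i * g_ i = 1)
    (hgB : ∀ i ∈ I, ∀ b : B, g_ i (cs.simple b) = cs.simple (gB i b))
    (hcond : ∀ i ∈ I, ∀ j ∈ I, SimpleCommute cs i j →
      (gB i j ∈ I ∧ gB j i = i ∧ g_ (gB i j) = g_ i * g_ j * g_ i) ∨
      (gB j i ∈ I ∧ gB i j = j ∧ g_ (gB j i) = g_ j * g_ i * g_ j))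
    (hfix : ∀ i ∈ I, gB i i = i) {ψ : PresentedGroup (Lrels cs I g_ gB) →* _}
    (hψ : ∀ x, ψ (.of x) = twistedSimple cs g_ x) : Function.Injective ψ := by
  have hs := simple_injective_of_isRightAngled cs hM
  have hinvol : ∀ i ∈ I, Function.Involutive (gB i) := fun i hi b => hs <| by
    rw [← hgB i hi, ← hgB i hi, ← MulAut.mul_apply, hinv i hi, MulAut.one_apply]
  let γ (x : {i : B // i ∈ I}) := simpleCommuteEmbedding hs (g_ x) (gB x) (hgB x x.2)
  rw [injective_iff_map_eq_one]
  intro a ha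
  obtain ⟨ys, rfl⟩ := exists_list_map_prod_eq generator_mul_self
    (PresentedGroup.closure_range_of (Lrels cs I g_ gB) ▸ Subgroup.mem_top a)
  obtain ⟨zs, hprod, hred⟩ := exists_isCommReduced_twistedWord (γ := γ) Subtype.val_injective
    (fun x => hfix x x.2) (generator_mul_self (g_ := g_) (gB := gB))
    (fun x y h => exists_generator_mul_generator_eq hinvol hcond x y h.symm) ys
  have hword : cs.wordProd (twistedWord Subtype.val γ zs) = 1 := by
    have hcomp : ψ ∘ .of = fun x : {i : B // i ∈ I} => twistedSimple cs g_ x := funext hψ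
    rw [← left_prod_twistedSimple (γ := γ) fun x : {i : B // i ∈ I} => hgB x x.2, ← hcomp,
      ← List.map_map, ← map_list_prod, hprod, ha, one_left]
  have hnil := hred.eq_nil_of_wordProd_eq_one hM hword
  cases zs with
  | nil => exact hprod.symm
  | cons => exact (List.cons_ne_nil _ _ hnil).elim

end TwistedGenerators

/-- Lemma on the group `L`: let `(W,S)` be a right-angled Coxeter system,
`G` a group of automorphisms of `(W,S)`, `I ⊆ S`, and `{g_i}_{i ∈ I}` involutions in `G`
satisfying conditions (1)–(3).  Then `l_i ↦ i·g_i` defines an isomorphism from `L` onto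
the subgroup `H ≤ W ⋊ G` generated by the `i·g_i`. -/
theorem L_iso_H (cs : CoxeterSystem M W)
    (hra : ∀ i j : B, i ≠ j → M i j = 2 ∨ M i j = 0)
    (G : Subgroup (MulAut W))
    (hGpres : ∀ g ∈ G, ∀ b : B, ∃ b' : B, (g : MulAut W) (cs.simple b) = cs.simple b')
    (I : Set B) (g_ : B → MulAut W) (gB : B → B → B)
    (hGmem : ∀ i ∈ I, g_ i ∈ G)
    (hinv : ∀ i ∈ I, g_ i * g_ i = 1)
    (hgB : ∀ i ∈ I, ∀ b : B, g_ i (cs.simple b) = cs.simple (gB i b))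
    (hcond2 : ∀ i ∈ I, ∀ j ∈ I,
      cs.simple i * cs.simple j = cs.simple j * cs.simple i →
      (gB i j ∈ I ∧ gB j i = i ∧ g_ (gB i j) = g_ i * g_ j * g_ i) ∨
      (gB j i ∈ I ∧ gB i j = j ∧ g_ (gB j i) = g_ j * g_ i * g_ j))
    (hcond3 : ∀ i ∈ I, gB i i = i) :
    ∃ φ : PresentedGroup (Lrels cs I g_ gB) ≃* Hsub cs I g_,
      ∀ x : {i : B // i ∈ I},
        (φ (PresentedGroup.of x) : W ⋊[MonoidHom.id (MulAut W)] MulAut W) =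
          inl (cs.simple x.1) * inr (g_ x.1) := by
  let ψ := PresentedGroup.toGroup (lift_twistedSimple_eq_one hinv hgB hcond3)
  have hψ : ∀ x, ψ (.of x) = twistedSimple cs g_ x := fun _ => PresentedGroup.toGroup.of _
  have hinj := injective_of_apply_of_eq_twistedSimple hra hinv hgB hcond2 hcond3 hψ
  exact ⟨(MonoidHom.ofInjective hinj).trans (.subgroupCongr (range_eq_Hsub hψ)), hψ⟩
end
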